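/- arXiv:2406.01051 — 5 statements merged into one kernel-verified Lean document; each statement's English description precedes it below -/
import Mathlib

section
/- Let I = I(S_N(e,s)) be the defining ideal of a star configuration S_N(e,s) in P^N built from s hyperplanes with defining linear forms in general position, where 1 ≤ e ≤ min(N,s), and let m be a positive integer. Let J be the ideal of the fat scheme mS_N(e,s), i.e. the symbolic powers of J are given by J^{(k)} = I^{(mk)}. Then the Waldschmidt constant of J equals ms/e, i.e. inf_{k≥1} α(I^{(mk)})/k = ms/e. -/
noncomputable section

open MvPolynomial

/-- `alpha J` is the least degree of a nonzero homogeneous form in the ideal `J`. -/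
def alpha {kk : Type*} [Field kk] {σ : Type*} (J : Ideal (MvPolynomial σ kk)) : ℕ :=
  sInf {d : ℕ | ∃ f ∈ J, f ≠ 0 ∧ MvPolynomial.IsHomogeneous f d}

section helpers

variable {kk : Type*} [Field kk] {σ : Type*}

lemma exists_proj (G : Set (MvPolynomial σ kk)) :
    ∃ P : MvPolynomial σ kk →ₗ[kk] MvPolynomial σ kk,
      (∀ x, P x ∈ Submodule.span kk G) ∧ ∀ x ∈ Submodule.span kk G, P x = x := by
  obtain ⟨p, hp⟩ := LinearMap.exists_leftInverse_of_injective
    (Submodule.span kk G).subtype (Submodule.ker_subtype _)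
  refine ⟨(Submodule.span kk G).subtype ∘ₗ p, fun x => by simp, fun x hx => ?_⟩
  have := LinearMap.congr_fun hp ⟨x, hx⟩
  simp only [LinearMap.comp_apply, Submodule.subtype_apply, LinearMap.id_apply] at this
  simp [this]

/-- the deformation homomorphism -/
def psi (P : MvPolynomial σ kk →ₗ[kk] MvPolynomial σ kk) :
    MvPolynomial σ kk →ₐ[kk] Polynomial (MvPolynomial σ kk) :=
  aeval (fun i => Polynomial.C (X i - P (X i)) + Polynomial.X * Polynomial.C (P (X i)))

lemma lin_induction {v : MvPolynomial σ kk} (hv : v.IsHomogeneous 1)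
    {W : Type*} [AddCommGroup W] [Module kk W] (A B : MvPolynomial σ kk →ₗ[kk] W)
    (h : ∀ i, A (X i) = B (X i)) : A v = B v := by
  have hv' : v ∈ Submodule.span kk (Set.range (X : σ → MvPolynomial σ kk)) := by
    rw [← homogeneousSubmodule_one_eq_span_X]; exact hv
  have : Set.EqOn A B (Set.range (X : σ → MvPolynomial σ kk)) := by
    rintro _ ⟨i, rfl⟩; exact h i
  exact LinearMap.eqOn_span this hv'

lemma psi_lin (P : MvPolynomial σ kk →ₗ[kk] MvPolynomial σ kk) {v : MvPolynomial σ kk}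
    (hv : v.IsHomogeneous 1) :
    psi P v = Polynomial.C (v - P v) + Polynomial.X * Polynomial.C (P v) := by
  let cC : MvPolynomial σ kk →ₗ[kk] Polynomial (MvPolynomial σ kk) :=
    (Polynomial.CAlgHom (R := kk) (A := MvPolynomial σ kk)).toLinearMap
  have := lin_induction hv (psi P).toLinearMap
    (cC ∘ₗ (LinearMap.id - P) + LinearMap.mulLeft kk Polynomial.X ∘ₗ cC ∘ₗ P)
    (fun i => by simp [psi, cC])
  simpa [cC] using this

lemma psi_eval_one (P : MvPolynomial σ kk →ₗ[kk] MvPolynomial σ kk) (f : MvPolynomial σ kk) :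
    (psi P f).eval 1 = f := by
  have : ((Polynomial.evalRingHom (1 : MvPolynomial σ kk)).comp (psi P).toRingHom)
      = RingHom.id _ := by
    apply MvPolynomial.ringHom_ext
    · intro r
      simp [psi, MvPolynomial.algebraMap_eq, Polynomial.algebraMap_apply]
    · intro i
      simp [psi]
  exact RingHom.congr_fun this f

lemma psi_mem_rees {G : Set (MvPolynomial σ kk)}
    {P : MvPolynomial σ kk →ₗ[kk] MvPolynomial σ kk}
    (hP : ∀ x, P x ∈ Submodule.span kk G) (f : MvPolynomial σ kk) :
    psi P f ∈ reesAlgebra (Ideal.span G) := by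
  have hPI : ∀ x, P x ∈ Ideal.span G := by
    intro x
    have : Submodule.span kk G ≤ (Ideal.span G).restrictScalars kk :=
      Submodule.span_le.2 (fun y hy => Ideal.subset_span hy)
    exact this (hP x)
  induction f using MvPolynomial.induction_on with
  | C a =>
    have : psi P (C a) = algebraMap (MvPolynomial σ kk) _ (C a) := by
      simp [psi, MvPolynomial.algebraMap_eq, Polynomial.algebraMap_apply]
    rw [this]
    exact Subalgebra.algebraMap_mem _ _
  | add p q hp hq => rw [map_add]; exact add_mem hp hq
  | mul_X p i hp =>
    rw [map_mul]
    refine mul_mem hp ?_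
    rw [psi_lin P (isHomogeneous_X _ _)]
    refine add_mem (Subalgebra.algebraMap_mem _ (X i - P (X i))) ?_
    rw [mem_reesAlgebra_iff]
    intro n
    rcases n with _ | n
    · simp
    · rw [Polynomial.coeff_X_mul, Polynomial.coeff_C]
      split_ifs with h1
      · subst h1
        simpa using hPI _
      · exact zero_mem _

lemma mem_pow_iff {G : Set (MvPolynomial σ kk)} (hG : ∀ v ∈ G, v.IsHomogeneous 1)
    {P : MvPolynomial σ kk →ₗ[kk] MvPolynomial σ kk}
    (hP : ∀ x, P x ∈ Submodule.span kk G) (hP' : ∀ x ∈ Submodule.span kk G, P x = x)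
    (f : MvPolynomial σ kk) (M : ℕ) :
    f ∈ Ideal.span G ^ M ↔ Polynomial.X ^ M ∣ psi P f := by
  constructor
  · intro hf
    have h1 : Ideal.map (psi P).toRingHom (Ideal.span G) ≤ Ideal.span {Polynomial.X} := by
      rw [Ideal.map_span, Ideal.span_le]
      rintro _ ⟨v, hv, rfl⟩
      have : psi P v = Polynomial.X * Polynomial.C v := by
        rw [psi_lin P (hG v hv), hP' v (Submodule.subset_span hv)]; simp
      exact Ideal.mem_span_singleton.2 ⟨_, this⟩
    have h2 := Ideal.mem_map_of_mem (psi P).toRingHom hf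
    rw [Ideal.map_pow] at h2
    have h3 := Ideal.pow_right_mono h1 M h2
    rw [Ideal.span_singleton_pow, Ideal.mem_span_singleton] at h3
    exact h3
  · intro h
    rw [Polynomial.X_pow_dvd_iff] at h
    rw [← psi_eval_one P f, Polynomial.eval_eq_sum, Polynomial.sum]
    refine Ideal.sum_mem _ (fun n hn => ?_)
    rw [one_pow, mul_one]
    by_cases hnM : n < M
    · rw [h n hnM]; exact zero_mem _
    · exact Ideal.pow_le_pow_right (not_lt.1 hnM) (psi_mem_rees hP f n)

lemma div_in {G : Set (MvPolynomial σ kk)} (hG : ∀ v ∈ G, v.IsHomogeneous 1)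
    {v g : MvPolynomial σ kk} (hv : v ∈ G) (hv0 : v ≠ 0) {M : ℕ}
    (h : v * g ∈ Ideal.span G ^ M) : g ∈ Ideal.span G ^ (M - 1) := by
  obtain ⟨P, hP, hP'⟩ := exists_proj G
  rcases M with _ | M
  · simp
  rw [mem_pow_iff hG hP hP'] at h ⊢
  rw [map_mul, psi_lin P (hG v hv), hP' v (Submodule.subset_span hv), sub_self, map_zero,
    zero_add, mul_assoc, pow_succ'] at h
  have h2 := (mul_dvd_mul_iff_left Polynomial.X_ne_zero).1 h
  refine Polynomial.prime_X.pow_dvd_of_dvd_mul_left _ ?_ h2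
  rw [Polynomial.X_dvd_iff]; simpa using hv0

lemma div_out {G : Set (MvPolynomial σ kk)} (hG : ∀ v ∈ G, v.IsHomogeneous 1)
    {v g : MvPolynomial σ kk} (hvh : v.IsHomogeneous 1) (hv : v ∉ Submodule.span kk G) {M : ℕ}
    (h : v * g ∈ Ideal.span G ^ M) : g ∈ Ideal.span G ^ M := by
  obtain ⟨P, hP, hP'⟩ := exists_proj G
  rw [mem_pow_iff hG hP hP'] at h ⊢
  rw [map_mul, psi_lin P hvh] at h
  refine Polynomial.prime_X.pow_dvd_of_dvd_mul_left _ ?_ h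
  rw [Polynomial.X_dvd_iff]
  simp only [Polynomial.coeff_add, Polynomial.coeff_C_zero, Polynomial.mul_coeff_zero,
    Polynomial.coeff_X_zero, zero_mul, add_zero]
  intro h0
  exact hv (by rw [sub_eq_zero.1 h0]; exact hP v)

lemma exists_restrict {v : MvPolynomial σ kk} (hv : v.IsHomogeneous 1) :
    ∃ (φ : MvPolynomial σ kk →ₐ[kk] MvPolynomial σ kk)
      (Q : MvPolynomial σ kk →ₗ[kk] MvPolynomial σ kk),
      (∀ w, w.IsHomogeneous 1 → φ w = Q w) ∧ LinearMap.ker Q = Submodule.span kk {v} ∧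
      (∀ w, w.IsHomogeneous 1 → (φ w).IsHomogeneous 1) ∧
      (∀ f, φ f = 0 → v ∣ f) ∧ φ v = 0 ∧ ∀ f, (φ f).totalDegree ≤ f.totalDegree := by
  obtain ⟨P, hP, hP'⟩ := exists_proj {v}
  have hhom : ∀ x, (P x).IsHomogeneous 1 := by
    intro x
    have : Submodule.span kk {v} ≤ homogeneousSubmodule σ kk 1 := by
      rw [Submodule.span_le]; rintro _ rfl; exact hv
    exact this (hP x)
  have hφX : ∀ i : σ, (X i - P (X i)).IsHomogeneous 1 :=
    fun i => (isHomogeneous_X _ _).sub (hhom _)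
  let φ : MvPolynomial σ kk →ₐ[kk] MvPolynomial σ kk := aeval (fun i => X i - P (X i))
  have hφQ : ∀ w, w.IsHomogeneous 1 → φ w = (LinearMap.id - P : _ →ₗ[kk] _) w := by
    intro w hw
    exact lin_induction hw φ.toLinearMap _ (fun i => by simp [φ])
  have hφhom : ∀ w n, w.IsHomogeneous n → (φ w).IsHomogeneous n := by
    intro w n hw
    have := hw.aeval _ hφX
    rwa [one_mul] at this
  have hev : ∀ f, (psi P f).coeff 0 = φ f := by
    intro f
    have : ((Polynomial.evalRingHom (0 : MvPolynomial σ kk)).comp (psi P).toRingHom)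
        = φ.toRingHom := by
      apply MvPolynomial.ringHom_ext
      · intro r
        simp [psi, φ, MvPolynomial.algebraMap_eq, Polynomial.algebraMap_apply]
      · intro i
        simp [psi, φ]
    rw [Polynomial.coeff_zero_eq_eval_zero]
    exact RingHom.congr_fun this f
  refine ⟨φ, LinearMap.id - P, hφQ, ?_, fun w => hφhom w 1, ?_, ?_, ?_⟩
  · ext x
    simp only [LinearMap.mem_ker, LinearMap.sub_apply, LinearMap.id_apply, sub_eq_zero]
    exact ⟨fun h => h ▸ hP x, fun h => (hP' x h).symm⟩
  · intro f hf
    have := (mem_pow_iff (G := {v}) (by rintro _ rfl; exact hv) hP hP' f 1).2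
      (by rw [pow_one, Polynomial.X_dvd_iff, hev, hf])
    rwa [pow_one, Ideal.mem_span_singleton] at this
  · rw [hφQ v hv]
    simp [hP' v (Submodule.mem_span_singleton_self v)]
  · intro f
    conv_lhs => rw [← sum_homogeneousComponent f, map_sum]
    refine totalDegree_finsetSum_le (fun i hi => ?_)
    refine (hφhom _ i (homogeneousComponent_isHomogeneous i f)).totalDegree_le.trans ?_
    have := Finset.mem_range.1 hi
    omega

lemma prod_dvd {ι : Type*} [DecidableEq ι] (ℓ : ι → MvPolynomial σ kk)
    (hdeg : ∀ i, (ℓ i).IsHomogeneous 1) (S : Finset ι)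
    (hgen : ∀ i ∈ S, ∀ j ∈ S, i ≠ j → ℓ i ∉ Submodule.span kk {ℓ j})
    (f : MvPolynomial σ kk) (hf : ∀ i ∈ S, ℓ i ∣ f) : ∏ i ∈ S, ℓ i ∣ f := by
  have key : ∀ j, ∀ S' : Finset ι, (∀ i ∈ S', ℓ i ∉ Submodule.span kk {ℓ j}) →
      ∀ g, ℓ j ∣ (∏ i ∈ S', ℓ i) * g → ℓ j ∣ g := by
    intro j S'
    induction S' using Finset.induction_on with
    | empty => intro _ g hg; simpa using hg
    | insert a S' ha ih =>
      intro h g hg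
      apply ih (fun i hi => h i (Finset.mem_insert_of_mem hi))
      rw [Finset.prod_insert ha, mul_assoc] at hg
      have := div_out (G := {ℓ j}) (by rintro _ rfl; exact hdeg j) (hdeg a)
        (h a (Finset.mem_insert_self _ _)) (M := 1)
        (by rw [pow_one]; exact Ideal.mem_span_singleton.2 hg)
      rwa [pow_one, Ideal.mem_span_singleton] at this
  induction S using Finset.induction_on with
  | empty => simp
  | insert a S ha ih =>
    obtain ⟨g, rfl⟩ := ih
      (fun i hi j hj => hgen i (Finset.mem_insert_of_mem hi) j (Finset.mem_insert_of_mem hj))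
      (fun i hi => hf i (Finset.mem_insert_of_mem hi))
    obtain ⟨q, hq⟩ := key a S (fun i hi => hgen i (Finset.mem_insert_of_mem hi) a
      (Finset.mem_insert_self _ _) (fun h => ha (h ▸ hi))) g (hf a (Finset.mem_insert_self _ _))
    rw [Finset.prod_insert ha, hq]
    exact ⟨q, by ring⟩

lemma prod_div {ι : Type*} [DecidableEq ι] (ℓ : ι → MvPolynomial σ kk)
    (hdeg : ∀ i, (ℓ i).IsHomogeneous 1) (T : Finset ι) (hne : ∀ i ∈ T, ℓ i ≠ 0)
    (S : Finset ι) (hS : ∀ i ∈ S, i ∉ T → ℓ i ∉ Submodule.span kk (ℓ '' (T : Set ι))) :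
    ∀ (g : MvPolynomial σ kk) (M : ℕ),
      (∏ i ∈ S, ℓ i) * g ∈ Ideal.span (ℓ '' (T : Set ι)) ^ M →
      g ∈ Ideal.span (ℓ '' (T : Set ι)) ^ (M - T.card) := by
  have hG : ∀ v ∈ ℓ '' (T : Set ι), v.IsHomogeneous 1 := by
    rintro _ ⟨i, _, rfl⟩; exact hdeg i
  suffices H : ∀ (g : MvPolynomial σ kk) (M : ℕ),
      (∏ i ∈ S, ℓ i) * g ∈ Ideal.span (ℓ '' (T : Set ι)) ^ M →
      g ∈ Ideal.span (ℓ '' (T : Set ι)) ^ (M - (S ∩ T).card) by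
    intro g M h
    refine Ideal.pow_le_pow_right ?_ (H g M h)
    have := Finset.card_le_card (Finset.inter_subset_right (s₁ := S) (s₂ := T))
    omega
  induction S using Finset.induction_on with
  | empty => intro g M h; simpa using h
  | insert a S ha ih =>
    intro g M h
    rw [Finset.prod_insert ha, mul_assoc] at h
    have ih' := ih (fun i hi => hS i (Finset.mem_insert_of_mem hi))
    by_cases haT : a ∈ T
    · have h2 := ih' _ _ (div_in hG ⟨a, haT, rfl⟩ (hne a haT) h)
      rw [Finset.insert_inter_of_mem haT, Finset.card_insert_of_notMem (by simp [ha])]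
      refine Ideal.pow_le_pow_right ?_ h2
      omega
    · rw [Finset.insert_inter_of_notMem haT]
      exact ih' _ _ (div_out hG (hdeg a) (hS a (Finset.mem_insert_self _ _) haT) h)

lemma notMem_span {ι : Type*} [DecidableEq ι] (ℓ : ι → MvPolynomial σ kk) {T : Finset ι} {i : ι}
    (hi : i ∉ T) (h : LinearIndepOn kk ℓ ((insert i T : Finset ι) : Set ι)) :
    ℓ i ∉ Submodule.span kk (ℓ '' (T : Set ι)) := by
  rw [Finset.coe_insert, linearIndepOn_insert (by simpa using hi)] at h
  exact h.2

theorem main_bound {ι : Type*} [DecidableEq ι] (e : ℕ) :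
    ∀ (M : ℕ) (S : Finset ι) (ℓ : ι → MvPolynomial σ kk), (∀ i, (ℓ i).IsHomogeneous 1) →
    e ≤ S.card →
    (∀ T ⊆ S, T.card ≤ e + 1 → LinearIndepOn kk ℓ (T : Set ι)) →
    ∀ f : MvPolynomial σ kk, f ≠ 0 →
    (∀ T ⊆ S, T.card = e → f ∈ Ideal.span (ℓ '' (T : Set ι)) ^ M) →
    M * S.card ≤ f.totalDegree * e ∧ (e = 0 → M = 0) := by
  induction e with
  | zero =>
    intro M S ℓ _ _ _ f hf0 hf
    have h := hf ∅ (by simp) (by simp)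
    have : M = 0 := by
      by_contra hM
      apply hf0
      have h' := Ideal.pow_le_self hM h
      simpa using h'
    simp [this]
  | succ e ihe =>
    intro M
    induction M using Nat.strong_induction_on with
    | _ M ihM =>
    intro S ℓ hdeg hcard hgen f hf0 hf
    refine ⟨?_, by simp⟩
    rcases Nat.eq_zero_or_pos M with rfl | hM
    · simp
    have hne : ∀ i ∈ S, ℓ i ≠ 0 := by
      intro i hi
      exact (hgen {i} (by simpa using hi) (by simp)).ne_zero (by simp)
    by_cases hall : ∀ i ∈ S, ℓ i ∣ f
    · obtain ⟨g, rfl⟩ := prod_dvd ℓ hdeg S (by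
        intro i hi j hj hij
        have := notMem_span ℓ (T := {j}) (i := i) (by simpa using hij)
          (hgen _ (by simp [Finset.insert_subset_iff, hi, hj])
            ((Finset.card_insert_le _ _).trans (by simp)))
        simpa using this) f hall
      have hg0 : g ≠ 0 := right_ne_zero_of_mul hf0
      have hp0 := left_ne_zero_of_mul hf0
      have h1 := (ihM (M - (e + 1)) (by omega) S ℓ hdeg hcard hgen g hg0 (by
        intro T hTS hT
        have := prod_div ℓ hdeg T (fun i hi => hne i (hTS hi)) S (fun i hi hiT =>
          notMem_span ℓ hiT (hgen _ (Finset.insert_subset hi hTS)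
            ((Finset.card_insert_le _ _).trans (by omega)))) g M (hf T hTS hT)
        rwa [hT] at this)).1
      have hd : (∏ i ∈ S, ℓ i).totalDegree = S.card := by
        have := (IsHomogeneous.prod S ℓ (fun _ => 1) (fun i _ => hdeg i)).totalDegree hp0
        simpa using this
      rw [totalDegree_mul_of_isDomain hp0 hg0, hd]
      have : M ≤ (M - (e + 1)) + (e + 1) := by omega
      nlinarith
    · push Not at hall
      obtain ⟨i, hi, hif⟩ := hall
      obtain ⟨φ, Q, hφQ, hker, hφh, hφd, hφv, hφt⟩ := exists_restrict (hdeg i)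
      have hc : (S.erase i).card = S.card - 1 := Finset.card_erase_of_mem hi
      obtain ⟨h1, h2⟩ := ihe M (S.erase i) (fun j => φ (ℓ j)) (fun j => hφh _ (hdeg j))
        (by omega) (by
          intro T hT hTc
          have hiT : i ∉ T := fun h => by simpa using hT h
          have hl := hgen (insert i T)
            (Finset.insert_subset hi (hT.trans (Finset.erase_subset _ _)))
            ((Finset.card_insert_le _ _).trans (by omega))
          have hn := notMem_span ℓ hiT hl
          have hlT : LinearIndepOn kk ℓ (T : Set ι) := hl.mono (by simp)
          have : (fun j => φ (ℓ j)) = Q ∘ ℓ := by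
            funext j; exact hφQ _ (hdeg j)
          rw [this]
          refine LinearIndependent.map (f := Q) hlT ?_
          rw [hker, Set.range_comp' ℓ Subtype.val, Subtype.range_coe]
          rw [Submodule.disjoint_span_singleton' (hne i hi)]
          exact hn) (φ f) (fun h => hif (hφd f h)) (by
          intro T hT hTc
          have hiT : i ∉ T := fun h => by simpa using hT h
          have hm := Ideal.mem_map_of_mem φ (hf (insert i T)
            (Finset.insert_subset hi (hT.trans (Finset.erase_subset _ _)))
            (by rw [Finset.card_insert_of_notMem hiT, hTc]))
          rw [Ideal.map_pow, Ideal.map_span] at hm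
          refine Ideal.pow_right_mono ?_ M hm
          rw [Ideal.span_le]
          rintro _ ⟨_, ⟨j, hj, rfl⟩, rfl⟩
          rcases Finset.mem_insert.1 (Finset.mem_coe.1 hj) with rfl | hj
          · rw [hφv]; exact zero_mem _
          · exact Ideal.subset_span ⟨j, hj, rfl⟩)
      have he : 0 < e := Nat.pos_of_ne_zero (fun h => by have := h2 h; omega)
      have ht := hφt f
      obtain ⟨c, hcS⟩ : ∃ c, S.card = c + 1 := ⟨S.card - 1, by omega⟩
      rw [hc, hcS] at h1
      rw [hcS] at hcard ⊢
      simp only [Nat.add_sub_cancel] at h1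
      have h3 : M * c ≤ f.totalDegree * e := h1.trans (Nat.mul_le_mul_right _ ht)
      have h4 : e ≤ c := by omega
      refine Nat.le_of_mul_le_mul_left (?_ : e * _ ≤ e * _) he
      have h5 : M * e ≤ M * c := Nat.mul_le_mul_left _ h4
      nlinarith

end helpers

/-- Let `I` be the ideal of the star configuration `S_N(e,s)` in `ℙ^N`,
built from `s` hyperplanes whose defining linear forms `ℓ 0, …, ℓ (s-1)` are in general
position (any at most `N+1` of them are linearly independent), where `1 ≤ e ≤ min(N,s)`.
For a positive integer `m`, the fat scheme `m S_N(e,s)` has defining ideal `J` with symbolic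
powers `J^{(k)} = I^{(mk)} = ⋂_{|T| = e} (span (ℓ '' T))^{mk}`.  Then the Waldschmidt
constant of `J`, namely `inf_{k ≥ 1} α(I^{(mk)})/k`, equals `m s / e`. -/
theorem waldschmidt_fat_star_configuration
    {kk : Type*} [Field kk] [IsAlgClosed kk]
    (N s e : ℕ) (he : 1 ≤ e) (heN : e ≤ N) (hes : e ≤ s)
    (ℓ : Fin s → MvPolynomial (Fin (N + 1)) kk)
    (hdeg : ∀ i, (ℓ i).IsHomogeneous 1)
    (hgen : ∀ T : Finset (Fin s), T.card ≤ N + 1 →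
      LinearIndependent kk (fun i : T => ℓ (i : Fin s)))
    (m : ℕ) (hm : 1 ≤ m) :
    ⨅ k : ℕ+, (alpha (⨅ (T : Finset (Fin s)) (_ : T.card = e),
        (Ideal.span (ℓ '' (T : Set (Fin s)))) ^ (m * (k : ℕ))) : ℝ) / ((k : ℕ) : ℝ)
      = ((m : ℝ) * (s : ℝ)) / (e : ℝ) := by
  classical
  set J : ℕ → Ideal (MvPolynomial (Fin (N + 1)) kk) := fun M =>
    ⨅ (T : Finset (Fin s)) (_ : T.card = e), (Ideal.span (ℓ '' (T : Set (Fin s)))) ^ M with hJ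
  change ⨅ k : ℕ+, (alpha (J (m * (k : ℕ))) : ℝ) / ((k : ℕ) : ℝ) = _
  have hmemJ : ∀ M f, f ∈ J M ↔ ∀ T : Finset (Fin s), T.card = e →
      f ∈ (Ideal.span (ℓ '' (T : Set (Fin s)))) ^ M := by
    intro M f; simp [hJ, Ideal.mem_iInf]
  have hne : ∀ i, ℓ i ≠ 0 := fun i =>
    (show LinearIndepOn kk ℓ (({i} : Finset (Fin s)) : Set (Fin s)) from
      hgen {i} (by simp)).ne_zero (by simp)
  set F := ∏ i, ℓ i with hF
  have hF0 : F ≠ 0 := Finset.prod_ne_zero_iff.2 (fun i _ => hne i)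
  have hFh : F.IsHomogeneous s := by
    have := IsHomogeneous.prod Finset.univ ℓ (fun _ => 1) (fun i _ => hdeg i)
    simpa using this
  have hFJ : F ∈ J e := by
    rw [hmemJ]
    intro T hT
    rw [hF, ← Finset.prod_mul_prod_compl T]
    refine Ideal.mul_mem_right _ _ ?_
    rw [← hT, ← Finset.prod_const]
    exact Ideal.prod_mem_prod (fun i hi => Ideal.subset_span ⟨i, hi, rfl⟩)
  have hFpow : ∀ q, F ^ q ∈ J (e * q) := by
    intro q
    rw [hmemJ] at hFJ ⊢
    intro T hT
    rw [pow_mul]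
    exact Ideal.pow_mem_pow (hFJ T hT) q
  have hlow : ∀ M, M * s ≤ alpha (J M) * e := by
    intro M
    have hnon : {d : ℕ | ∃ f ∈ J M, f ≠ 0 ∧ MvPolynomial.IsHomogeneous f d}.Nonempty := by
      refine ⟨s * M, F ^ M, ?_, pow_ne_zero _ hF0, hFh.pow M⟩
      have := hFpow M
      rw [hmemJ] at this ⊢
      intro T hT
      exact Ideal.pow_le_pow_right (Nat.le_mul_of_pos_left M he) (this T hT)
    obtain ⟨f, hfJ, hf0, hfh⟩ := Nat.sInf_mem hnon
    have := (main_bound e M Finset.univ ℓ hdeg (by simpa using hes)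
      (fun T _ hT => hgen T (by omega)) f hf0 (fun T _ hT => (hmemJ M f).1 hfJ T hT)).1
    rw [hfh.totalDegree hf0] at this
    simpa [alpha] using this
  have he0 : (0 : ℝ) < e := by exact_mod_cast he
  apply le_antisymm
  · have hb : BddBelow (Set.range (fun k : ℕ+ =>
        (alpha (J (m * (k : ℕ))) : ℝ) / ((k : ℕ) : ℝ))) :=
      ⟨0, by rintro _ ⟨k, rfl⟩; positivity⟩
    refine (ciInf_le hb ⟨e, he⟩).trans ?_
    have : alpha (J (m * e)) ≤ s * m := by
      refine Nat.sInf_le ⟨F ^ m, ?_, pow_ne_zero _ hF0, hFh.pow m⟩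
      rw [mul_comm]; exact hFpow m
    have h' : (alpha (J (m * e)) : ℝ) ≤ m * s := by
      rw [mul_comm (m : ℝ)]; exact_mod_cast this
    exact div_le_div_of_nonneg_right h' he0.le
  · refine le_ciInf (fun k => ?_)
    have hk : (0 : ℝ) < ((k : ℕ) : ℝ) := by exact_mod_cast k.pos
    rw [div_le_div_iff₀ he0 hk]
    have h := hlow (m * (k : ℕ))
    have h' : ((m : ℝ) * ((k : ℕ) : ℝ)) * s ≤ alpha (J (m * (k : ℕ))) * e := by
      exact_mod_cast h
    linarith
end
end

section
/- Let s ≥ 3 and let L_1,…,L_s be lines in P^2 in general position (pairwise distinct and no three concurrent), with star configuration points p_{ij} = L_i ∩ L_j for 1 ≤ i < j ≤ s. For each i let q_i be a point of L_i distinct from all the points p_{jk}, with q_1,…,q_s pairwise distinct and not all collinear. Let W_2 be the fat quasi-star configuration with defining ideal I(W_2) = ⋂_{i=1}^s I(q_i) ∩ ⋂_{1≤i<j≤s} I(p_{ij})^2. Then α(I(W_2)^{(k)}) = sk for every integer k ≥ 1; in particular the Waldschmidt constant of I(W_2) equals s. -/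
noncomputable section

open MvPolynomial

/-- The homogeneous (prime) ideal of the point of `ℙ²` represented by the nonzero vector
`p`, generated by the linear forms vanishing at `p`. -/
def pointIdeal {kk : Type*} [Field kk] (p : Fin 3 → kk) : Ideal (MvPolynomial (Fin 3) kk) :=
  Ideal.span {f | f.IsHomogeneous 1 ∧ MvPolynomial.eval p f = 0}

/-- Two nonzero vectors represent the same point of `ℙ²`. -/
def projEq {kk : Type*} [Field kk] (p q : Fin 3 → kk) : Prop :=
  ∃ c : kk, c ≠ 0 ∧ q = c • p

theorem lin_form {kk : Type*} [Field kk] {f : MvPolynomial (Fin 3) kk} (hf : f.IsHomogeneous 1) :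
    ∃ a : Fin 3 → kk, f = ∑ i, C (a i) * X i := by
  have h : f ∈ homogeneousSubmodule (Fin 3) kk 1 := hf
  rw [homogeneousSubmodule_one_eq_span_X, Submodule.mem_span_range_iff_exists_fun] at h
  obtain ⟨c, hc⟩ := h
  exact ⟨c, by rw [← hc]; simp [smul_eq_C_mul]⟩

/-- generic expansion at a point -/
def Phi {kk : Type*} [Field kk] (p : Fin 3 → kk) :
    MvPolynomial (Fin 3) kk →ₐ[kk] Polynomial (MvPolynomial (Option (Fin 3)) kk) :=
  aeval (fun i => Polynomial.C (X none * C (p i)) + Polynomial.X * Polynomial.C (X (some i)))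

theorem Phi_lin {kk : Type*} [Field kk] (p : Fin 3 → kk) {f : MvPolynomial (Fin 3) kk}
    (hf : f.IsHomogeneous 1) :
    Phi p f = Polynomial.C (X none * C (eval p f)) +
      Polynomial.X * Polynomial.C (rename some f) := by
  obtain ⟨a, rfl⟩ := lin_form hf
  have hC : ∀ a : kk, (algebraMap kk (Polynomial (MvPolynomial (Option (Fin 3)) kk))) a
      = Polynomial.C (C a) := fun a => rfl
  simp only [Phi, map_sum, map_mul, aeval_C, aeval_X, hC, eval_C, eval_X, rename_C, rename_X,
    Fin.sum_univ_three, map_add]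
  ring

theorem Phi_pow {kk : Type*} [Field kk] (p : Fin 3 → kk) (m : ℕ) {f : MvPolynomial (Fin 3) kk}
    (hf : f ∈ pointIdeal p ^ m) : Polynomial.X ^ m ∣ Phi p f := by
  have h1 : (pointIdeal p).map (Phi p) ≤ Ideal.span {Polynomial.X} := by
    rw [pointIdeal, Ideal.map_span, Ideal.span_le]
    rintro _ ⟨g, ⟨hg, hg0⟩, rfl⟩
    rw [SetLike.mem_coe, Ideal.mem_span_singleton, Phi_lin p hg, hg0]
    simp
  have h2 := Ideal.mem_map_of_mem (Phi p) hf
  rw [Ideal.map_pow] at h2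
  have h3 := Ideal.pow_right_mono h1 m h2
  rwa [Ideal.span_singleton_pow, Ideal.mem_span_singleton] at h3

/-- specialization -/
theorem Phi_spec {kk : Type*} [Field kk] (p w v : Fin 3 → kk) (b c : kk)
    (h : b • p = w + c • v) (m : ℕ) {f : MvPolynomial (Fin 3) kk}
    (hf : Polynomial.X ^ m ∣ Phi p f) :
    (Polynomial.X - Polynomial.C c) ^ m ∣
      aeval (fun i => Polynomial.C (w i) + Polynomial.X * Polynomial.C (v i)) f := by
  let e : MvPolynomial (Option (Fin 3)) kk →ₐ[kk] Polynomial kk :=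
    aeval (fun o => Polynomial.C (o.elim b v))
  let S : Polynomial (MvPolynomial (Option (Fin 3)) kk) →+* Polynomial kk :=
    Polynomial.eval₂RingHom e.toRingHom (Polynomial.X - Polynomial.C c)
  have h1 := map_dvd S hf
  have h2 : ∀ f, S (Phi p f) =
      aeval (fun i => Polynomial.C (w i) + Polynomial.X * Polynomial.C (v i)) f := by
    intro f
    induction f using MvPolynomial.induction_on with
    | C a =>
      simp only [Phi, aeval_C]
      change S (Polynomial.C (C a)) = Polynomial.C a
      simp [S, e]
    | add f g h1 h2 => rw [map_add, map_add, map_add, h1, h2]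
    | mul_X f i hi =>
      rw [map_mul, map_mul, map_mul, hi]
      congr 1
      have h3 : b * p i = w i + c * v i := congrFun h i
      have h4 : Polynomial.C b * Polynomial.C (p i) =
        Polynomial.C (w i) + Polynomial.C c * Polynomial.C (v i) := by
        rw [← Polynomial.C_mul, h3, Polynomial.C_add, Polynomial.C_mul]
      simp [S, e, Phi]
      linear_combination h4
  rw [h2, map_pow] at h1
  simpa [S] using h1

theorem three_dep {kk : Type*} [Field kk] (M : Matrix (Fin 3) (Fin 3) kk) (a : Fin 3 → kk)
    (ha : a ≠ 0) (h : ∀ i, ∑ j, M i j * a j = 0) :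
    ∃ u : Fin 3 → kk, u ≠ 0 ∧ ∀ j, ∑ i, u i * M i j = 0 := by
  have h1 : M.det = 0 := Matrix.exists_mulVec_eq_zero_iff.1 ⟨a, ha, funext h⟩
  obtain ⟨u, hu, h2⟩ := Matrix.exists_vecMul_eq_zero_iff.2 h1
  exact ⟨u, hu, fun j => congrFun h2 j⟩

theorem lin_prime {kk : Type*} [Field kk] {f : MvPolynomial (Fin 3) kk}
    (hf : f.IsHomogeneous 1) (h0 : f ≠ 0) : Prime f := by
  rw [← UniqueFactorizationMonoid.irreducible_iff_prime]
  apply irreducible_of_totalDegree_eq_one (hf.totalDegree h0)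
  intro x hx
  obtain ⟨d, hd⟩ := ne_zero_iff.1 h0
  refine isUnit_iff_ne_zero.2 ?_
  rintro rfl
  exact hd (zero_dvd_iff.1 (hx d))

theorem dvd_of_vanish {kk : Type*} [Field kk] [IsAlgClosed kk] {f F : MvPolynomial (Fin 3) kk}
    (hf : Prime f) (h : ∀ w, eval w f = 0 → eval w F = 0) : f ∣ F := by
  have h1 : F ∈ vanishingIdeal kk (zeroLocus kk (Ideal.span {f})) := by
    rw [mem_vanishingIdeal_iff]
    intro x hx
    rw [mem_zeroLocus_iff] at hx
    have := hx f (Ideal.mem_span_singleton_self f)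
    rw [aeval_eq_eval] at *
    exact h x this
  rw [vanishingIdeal_zeroLocus_eq_radical, Ideal.IsPrime.radical
    ((Ideal.span_singleton_prime hf.ne_zero).2 hf)] at h1
  exact Ideal.mem_span_singleton.1 h1

theorem prod_dvd_aux {M ι : Type*} [CommRing M] [IsDomain M] (T : Finset ι) (l : ι → M)
    (hl : ∀ i, Prime (l i)) (hn : ∀ i j, i ≠ j → ¬ l i ∣ l j) (F : M) (h : ∀ i, l i ∣ F) :
    ∏ i ∈ T, l i ∣ F := by
  classical
  induction T using Finset.induction_on with
  | empty => simp
  | insert a T ha ih =>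
    obtain ⟨G, rfl⟩ := ih
    rw [Finset.prod_insert ha, mul_comm]
    refine mul_dvd_mul_left _ ?_
    refine ((hl a).dvd_or_dvd (h a)).resolve_left ?_
    intro hd
    obtain ⟨j, hj, hd⟩ := (hl a).exists_mem_finset_dvd hd
    exact hn a j (by rintro rfl; exact ha hj) hd

theorem line_vanish {kk : Type*} [Field kk] {ι : Type*} (T : Finset ι) (P : ι → Fin 3 → kk)
    (w v : Fin 3 → kk) (b c : ι → kk) (h : ∀ i ∈ T, b i • P i = w + c i • v)
    (hc : Set.InjOn c T) (m : ℕ) (F : MvPolynomial (Fin 3) kk)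
    (hF : ∀ i ∈ T, Polynomial.X ^ m ∣ Phi (P i) F) (hd : F.totalDegree < T.card * m) :
    eval w F = 0 := by
  set g : Polynomial kk :=
      aeval (fun i => Polynomial.C (w i) + Polynomial.X * Polynomial.C (v i)) F with hg
  have h1 : ∏ i ∈ T, (Polynomial.X - Polynomial.C (c i)) ^ m ∣ g := by
    apply Finset.prod_dvd_of_coprime
    · intro i hi j hj hij
      exact (Polynomial.isCoprime_X_sub_C_of_isUnit_sub
        (sub_ne_zero.2 (fun e => hij (hc hi hj e))).isUnit).pow
    · intro i hi
      exact Phi_spec (P i) w v (b i) (c i) (h i hi) m (hF i hi)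
  have h2 : g.natDegree ≤ F.totalDegree * 1 := by
    apply aeval_natDegree_le _ le_rfl
    intro i
    compute_degree
  have h3 : g = 0 := by
    apply Polynomial.eq_zero_of_dvd_of_natDegree_lt h1
    rw [Polynomial.natDegree_prod_of_monic _ _ (fun i _ => (Polynomial.monic_X_sub_C _).pow m)]
    simp
    omega
  have h4 : Polynomial.eval 0 g = eval w F := by
    rw [hg, ← Polynomial.coe_aeval_eq_eval, ← AlgHom.comp_apply, comp_aeval, ← aeval_eq_eval]
    simp
  rw [← h4, h3, Polynomial.eval_zero]

theorem eval_smul_lin {kk : Type*} [Field kk] {f : MvPolynomial (Fin 3) kk}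
    (hf : f.IsHomogeneous 1) (b : kk) (p : Fin 3 → kk) : eval (b • p) f = b * eval p f := by
  obtain ⟨a, rfl⟩ := lin_form hf
  simp [Fin.sum_univ_three]
  ring

theorem span_two {kk : Type*} [Field kk] {f : MvPolynomial (Fin 3) kk}
    (hf : f.IsHomogeneous 1) (h0 : f ≠ 0) (p w v : Fin 3 → kk) (hp : eval p f = 0)
    (hw : eval w f = 0) (hv : eval v f = 0) (hv0 : v ≠ 0) (hpv : ∀ b : kk, p ≠ b • v) :
    ∃ b c : kk, b • p = w + c • v := by
  obtain ⟨a, rfl⟩ := lin_form hf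
  have ha : a ≠ 0 := by
    rintro rfl
    simp at h0
  obtain ⟨u, hu, h⟩ := three_dep ![p, w, v] a ha (by
    intro i
    fin_cases i
    · simpa [mul_comm] using hp
    · simpa [mul_comm] using hw
    · simpa [mul_comm] using hv)
  simp [Fin.sum_univ_three] at h
  have h1 : u 1 ≠ 0 := by
    intro h1
    have h2 : u 0 = 0 := by
      by_contra h2
      apply hpv (-(u 2) / u 0)
      funext j
      have := h j
      rw [h1] at this
      simp only [Pi.smul_apply, smul_eq_mul]
      field_simp
      linear_combination this
    have h3 : u 2 ≠ 0 := by
      intro h3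
      apply hu
      funext i
      fin_cases i <;> simp [h1, h2, h3]
    apply hv0
    funext j
    have := h j
    rw [h1, h2] at this
    simpa [h3] using this
  refine ⟨-(u 0) / u 1, u 2 / u 1, ?_⟩
  funext j
  have := h j
  simp only [Pi.smul_apply, smul_eq_mul, Pi.add_apply]
  field_simp
  linear_combination -this

theorem no_common {kk : Type*} [Field kk] {s : ℕ} (ℓ : Fin s → MvPolynomial (Fin 3) kk)
    (hdeg : ∀ i, (ℓ i).IsHomogeneous 1)
    (hgen : ∀ T : Finset (Fin s), T.card ≤ 3 →
      LinearIndependent kk (fun i : T => ℓ (i : Fin s)))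
    (i j l : Fin s) (hij : i ≠ j) (hil : i ≠ l) (hjl : j ≠ l) (p : Fin 3 → kk) (hp : p ≠ 0)
    (h1 : eval p (ℓ i) = 0) (h2 : eval p (ℓ j) = 0) : eval p (ℓ l) ≠ 0 := by
  intro h3
  choose a ha using fun i => lin_form (hdeg i)
  obtain ⟨u, hu, h⟩ := three_dep ![a i, a j, a l] p hp (by
    intro e
    fin_cases e
    · rw [ha] at h1; simpa using h1
    · rw [ha] at h2; simpa using h2
    · rw [ha] at h3; simpa using h3)
  simp [Fin.sum_univ_three] at h
  have hli := hgen {i, j, l} Finset.card_le_three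
  rw [Fintype.linearIndependent_iff] at hli
  have key := hli (fun x => if x.1 = i then u 0 else if x.1 = j then u 1 else u 2) (by
    rw [Finset.sum_coe_sort ({i, j, l} : Finset (Fin s))
      (fun x => (if x = i then u 0 else if x = j then u 1 else u 2) • ℓ x)]
    rw [Finset.sum_insert (by simp [hij, hil]), Finset.sum_insert (by simp [hjl]),
      Finset.sum_singleton]
    simp only [if_true, hij.symm, hil.symm, hjl.symm, if_false]
    have e0 := congrArg (C (σ := Fin 3)) (h 0)
    have e1 := congrArg (C (σ := Fin 3)) (h 1)
    have e2 := congrArg (C (σ := Fin 3)) (h 2)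
    simp only [map_add, map_mul, map_zero] at e0 e1 e2
    rw [ha i, ha j, ha l]
    simp only [smul_eq_C_mul, Fin.sum_univ_three]
    linear_combination X 0 * e0 + X 1 * e1 + X 2 * e2)
  have k0 := key ⟨i, by simp⟩
  have k1 := key ⟨j, by simp⟩
  have k2 := key ⟨l, by simp⟩
  simp [hij.symm, hil.symm, hjl.symm] at k0 k1 k2
  apply hu
  funext e
  fin_cases e <;> simp [k0, k1, k2]

theorem dvd_step {kk : Type*} [Field kk] [IsAlgClosed kk] {s : ℕ} (hs : 3 ≤ s)
    (ℓ : Fin s → MvPolynomial (Fin 3) kk)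
    (hdeg : ∀ i, (ℓ i).IsHomogeneous 1) (hℓ0 : ∀ i, ℓ i ≠ 0)
    (P : Fin s → Fin s → (Fin 3 → kk))
    (hPi : ∀ i j, i ≠ j → eval (P i j) (ℓ i) = 0)
    (hPj : ∀ i j, i ≠ j → eval (P i j) (ℓ j) = 0)
    (hPl : ∀ i j l, i ≠ j → i ≠ l → j ≠ l → eval (P i j) (ℓ l) ≠ 0)
    (q : Fin s → (Fin 3 → kk)) (hq0 : ∀ i, q i ≠ 0) (hqL : ∀ i, eval (q i) (ℓ i) = 0)
    (hqP : ∀ i j, i ≠ j → ∀ b : kk, P i j ≠ b • q i)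
    (F : MvPolynomial (Fin 3) kk) (m : ℕ)
    (hF : ∀ i j, i ≠ j → Polynomial.X ^ m ∣ Phi (P i j) F)
    (hd : F.totalDegree < (s - 1) * m) (i : Fin s) : ℓ i ∣ F := by
  have gen : ∀ w, eval w (ℓ i) = 0 → (∀ b : kk, w ≠ b • q i) → eval w F = 0 := by
    intro w hw hwq
    have h1 : ∀ j, ∃ b c : kk, i ≠ j → b • P i j = w + c • q i := by
      intro j
      by_cases hij : i = j
      · exact ⟨0, 0, fun h => absurd hij h⟩
      · obtain ⟨b, c, h⟩ := span_two (hdeg i) (hℓ0 i) (P i j) w (q i) (hPi i j hij) hw (hqL i)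
          (hq0 i) (hqP i j hij)
        exact ⟨b, c, fun _ => h⟩
    choose b c hbc using h1
    have hb : ∀ j, i ≠ j → b j ≠ 0 := by
      intro j hj h
      have := hbc j hj
      rw [h, zero_smul] at this
      apply hwq (- c j)
      rw [neg_smul]
      exact eq_neg_of_add_eq_zero_left this.symm
    refine line_vanish (Finset.univ.erase i) (P i) w (q i) b c ?_ ?_ m F ?_ ?_
    · intro j hj
      exact hbc j (Finset.ne_of_mem_erase hj).symm
    · intro j hj j' hj' hcc
      have hj1 : i ≠ j := (Finset.ne_of_mem_erase hj).symm
      have hj2 : i ≠ j' := (Finset.ne_of_mem_erase hj').symm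
      by_contra hjj
      have e := (hbc j hj1).trans ((congrArg (fun c => w + c • q i) hcc).trans (hbc j' hj2).symm)
      have e2 := congrArg (fun x => eval x (ℓ j')) e
      simp only [eval_smul_lin (hdeg j'), hPj i j' hj2, mul_zero] at e2
      exact mul_ne_zero (hb j hj1) (hPl i j j' hj1 hj2 hjj) e2
    · intro j hj
      exact hF i j (Finset.ne_of_mem_erase hj).symm
    · simpa using hd
  apply dvd_of_vanish (lin_prime (hdeg i) (hℓ0 i))
  intro w hw
  by_cases hwq : ∀ b : kk, w ≠ b • q i
  · exact gen w hw hwq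
  push Not at hwq
  obtain ⟨b, rfl⟩ := hwq
  obtain ⟨j, hj⟩ : ∃ j, i ≠ j := by
    haveI : Nontrivial (Fin s) := Fin.nontrivial_iff_two_le.2 (by omega)
    obtain ⟨j, hj⟩ := exists_ne i
    exact ⟨j, hj.symm⟩
  set g : Polynomial kk :=
      aeval (fun e => Polynomial.C ((b • q i) e) + Polynomial.X * Polynomial.C (P i j e)) F with hg
  have h4 : ∀ c, Polynomial.eval c g = eval (b • q i + c • P i j) F := by
    intro c
    rw [hg, ← Polynomial.coe_aeval_eq_eval, ← AlgHom.comp_apply, comp_aeval, ← aeval_eq_eval]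
    simp only [map_add, map_mul, Polynomial.aeval_C, Polynomial.aeval_X]
    rfl
  have h5 : g = 0 := by
    apply Polynomial.eq_zero_of_infinite_isRoot
    refine Set.Infinite.mono (s := {0}ᶜ) ?_ (Set.finite_singleton 0).infinite_compl
    intro c hc
    change Polynomial.eval c g = 0
    rw [h4]
    apply gen
    · have := hPi i j hj
      have h6 := hqL i
      obtain ⟨a, ha⟩ := lin_form (hdeg i)
      rw [ha] at this h6 ⊢
      simp [Fin.sum_univ_three] at this h6 ⊢
      linear_combination c * this + b * h6
    · intro b' hb'
      apply hqP i j hj ((b' - b) / c)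
      have hc0 : c ≠ 0 := hc
      funext e
      have := congrFun hb' e
      simp only [Pi.smul_apply, smul_eq_mul, Pi.add_apply] at this ⊢
      field_simp
      linear_combination this
  have h6 := h4 0
  rw [h5] at h6
  simpa using h6.symm

theorem star_bound {kk : Type*} [Field kk] [IsAlgClosed kk] {s : ℕ} (hs : 3 ≤ s)
    (ℓ : Fin s → MvPolynomial (Fin 3) kk)
    (hdeg : ∀ i, (ℓ i).IsHomogeneous 1) (hℓ0 : ∀ i, ℓ i ≠ 0)
    (P : Fin s → Fin s → (Fin 3 → kk))
    (hPi : ∀ i j, i ≠ j → eval (P i j) (ℓ i) = 0)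
    (hPj : ∀ i j, i ≠ j → eval (P i j) (ℓ j) = 0)
    (hPl : ∀ i j l, i ≠ j → i ≠ l → j ≠ l → eval (P i j) (ℓ l) ≠ 0)
    (q : Fin s → (Fin 3 → kk)) (hq0 : ∀ i, q i ≠ 0) (hqL : ∀ i, eval (q i) (ℓ i) = 0)
    (hqP : ∀ i j, i ≠ j → ∀ b : kk, P i j ≠ b • q i) (k : ℕ) :
    ∀ F : MvPolynomial (Fin 3) kk, F ≠ 0 →
      (∀ i j, i ≠ j → Polynomial.X ^ (2 * k) ∣ Phi (P i j) F) → s * k ≤ F.totalDegree := by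
  induction k with
  | zero => simp
  | succ k ih =>
    intro F hF0 hF
    by_contra hlt
    push Not at hlt
    have hd : F.totalDegree < (s - 1) * (2 * (k + 1)) := by
      refine hlt.trans_le ?_
      obtain ⟨t, rfl⟩ : ∃ t, s = t + 2 := ⟨s - 2, by omega⟩
      simp only [Nat.add_succ_sub_one]
      nlinarith
    have hdv := dvd_step hs ℓ hdeg hℓ0 P hPi hPj hPl q hq0 hqL hqP F _ hF hd
    have hnd : ∀ i j, i ≠ j → ¬ ℓ i ∣ ℓ j := by
      rintro i j hij ⟨c, hc⟩
      obtain ⟨l, hl⟩ : ∃ l, l ∉ ({i, j} : Finset (Fin s)) := by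
        by_contra hall
        push Not at hall
        have h1 := Finset.card_le_card (fun l _ => hall l : (Finset.univ : Finset (Fin s)) ⊆ {i, j})
        have h2 := Finset.card_le_two (a := i) (b := j)
        simp at h1
        omega
      simp at hl
      apply hPl i l j (Ne.symm hl.1) hij hl.2
      rw [hc, map_mul, hPi i l (Ne.symm hl.1), zero_mul]
    obtain ⟨G, rfl⟩ := prod_dvd_aux Finset.univ ℓ (fun i => lin_prime (hdeg i) (hℓ0 i)) hnd F hdv
    have hG0 : G ≠ 0 := right_ne_zero_of_mul hF0
    have hp0 : ∏ i, ℓ i ≠ 0 := left_ne_zero_of_mul hF0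
    have hpd : (∏ i, ℓ i).totalDegree = s := by
      have := IsHomogeneous.prod Finset.univ ℓ (fun _ => 1) (fun i _ => hdeg i)
      rw [this.totalDegree hp0]
      simp
    rw [totalDegree_mul_of_isDomain hp0 hG0, hpd] at hlt
    have := ih G hG0 (by
      intro i j hij
      have h := hF i j hij
      rw [map_mul, map_prod, ← Finset.mul_prod_erase Finset.univ _ (Finset.mem_univ i),
        ← Finset.mul_prod_erase (Finset.univ.erase i) _
          (Finset.mem_erase.2 ⟨hij.symm, Finset.mem_univ j⟩),
        Phi_lin _ (hdeg i), Phi_lin _ (hdeg j), hPi i j hij, hPj i j hij] at h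
      set Q := ∏ x ∈ (Finset.univ.erase i).erase j, Phi (P i j) (ℓ x) with hQ
      have h' : Polynomial.X ^ 2 * Polynomial.X ^ (2 * k) ∣ Polynomial.X ^ 2 *
          ((Polynomial.C (rename some (ℓ i)) * Polynomial.C (rename some (ℓ j)) * Q)
            * Phi (P i j) G) := by
        convert h using 1
        · ring
        · simp only [map_zero, mul_zero, zero_add]
          ring
      have h'' := (mul_dvd_mul_iff_left (pow_ne_zero 2 Polynomial.X_ne_zero)).1 h'
      refine Polynomial.prime_X.pow_dvd_of_dvd_mul_left _ ?_ h''
      have hinj := rename_injective (R := kk) (some : Fin 3 → Option (Fin 3))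
        (Option.some_injective _)
      have hC : ∀ l, ¬ (Polynomial.X : Polynomial (MvPolynomial (Option (Fin 3)) kk)) ∣
          Polynomial.C (rename some (ℓ l)) := by
        intro l hl
        rw [Polynomial.X_dvd_iff, Polynomial.coeff_C_zero] at hl
        exact hℓ0 l (hinj (hl.trans (map_zero _).symm))
      intro hX
      rcases Polynomial.prime_X.dvd_or_dvd hX with hX | hX
      · rcases Polynomial.prime_X.dvd_or_dvd hX with hX | hX
        · exact hC _ hX
        · exact hC _ hX
      · obtain ⟨l, hl, hX⟩ := Polynomial.prime_X.exists_mem_finset_dvd hX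
        simp at hl
        rw [Phi_lin _ (hdeg l), Polynomial.X_dvd_iff] at hX
        simp at hX
        exact hPl i j l hij (Ne.symm hl.2) (Ne.symm hl.1) hX)
    rw [Nat.mul_succ] at hlt
    omega

/-- Let `s ≥ 3` and let `L_1, …, L_s` be lines of `ℙ²` in general position
(defining linear forms `ℓ i`, any three of them linearly independent, hence pairwise
distinct and no three concurrent), and let `p i j` (for `i < j`) represent the star
configuration point `L_i ∩ L_j`.  For each `i` let `q i` be a point of `L_i` distinct from
all the points `p j l`, with `q 1, …, q s` pairwise distinct and not all collinear.  Let
`W_2` be the fat quasi-star configuration with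
`I(W_2) = ⋂_i I(q_i) ∩ ⋂_{i<j} I(p_{ij})²`, with `k`-th symbolic power
`⋂_i I(q_i)^k ∩ ⋂_{i<j} I(p_{ij})^{2k}`.  Then `α(I(W_2)^{(k)}) = s·k` for every `k ≥ 1`;
in particular the Waldschmidt constant of `I(W_2)` equals `s`. -/
theorem waldschmidt_fat_quasi_star
    {kk : Type*} [Field kk] [IsAlgClosed kk]
    (s : ℕ) (hs : 3 ≤ s)
    (ℓ : Fin s → MvPolynomial (Fin 3) kk)
    (hdeg : ∀ i, (ℓ i).IsHomogeneous 1)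
    (hgen : ∀ T : Finset (Fin s), T.card ≤ 3 →
      LinearIndependent kk (fun i : T => ℓ (i : Fin s)))
    (p : Fin s → Fin s → (Fin 3 → kk))
    (hp0 : ∀ i j, i < j → p i j ≠ 0)
    (hpL : ∀ i j, i < j →
      MvPolynomial.eval (p i j) (ℓ i) = 0 ∧ MvPolynomial.eval (p i j) (ℓ j) = 0)
    (q : Fin s → (Fin 3 → kk))
    (hq0 : ∀ i, q i ≠ 0)
    (hqL : ∀ i, MvPolynomial.eval (q i) (ℓ i) = 0)
    (hqp : ∀ i j l, j < l → ¬ projEq (q i) (p j l))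
    (hqdist : ∀ i i', i ≠ i' → ¬ projEq (q i) (q i'))
    (hqncol : ¬ ∃ g : MvPolynomial (Fin 3) kk, g ≠ 0 ∧ g.IsHomogeneous 1 ∧
      ∀ i, MvPolynomial.eval (q i) g = 0) :
    (∀ k : ℕ, 1 ≤ k →
      alpha ((⨅ i : Fin s, pointIdeal (q i) ^ k) ⊓
        ⨅ (i : Fin s) (j : Fin s) (_ : i < j), pointIdeal (p i j) ^ (2 * k)) = s * k) ∧
    ⨅ k : ℕ+, (alpha ((⨅ i : Fin s, pointIdeal (q i) ^ (k : ℕ)) ⊓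
        ⨅ (i : Fin s) (j : Fin s) (_ : i < j),
          pointIdeal (p i j) ^ (2 * (k : ℕ))) : ℝ) / ((k : ℕ) : ℝ) = (s : ℝ) := by
  classical
  have hℓ0 : ∀ i, ℓ i ≠ 0 := by
    intro i
    exact (hgen {i} (by simp)).ne_zero ⟨i, by simp⟩
  set P : Fin s → Fin s → (Fin 3 → kk) := fun i j => if i < j then p i j else p j i with hPdef
  have hP : ∀ i j, i ≠ j → ∃ a b, a < b ∧ P i j = p a b ∧
      eval (p a b) (ℓ i) = 0 ∧ eval (p a b) (ℓ j) = 0 := by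
    intro i j hij
    rcases lt_or_gt_of_ne hij with h | h
    · exact ⟨i, j, h, by simp [hPdef, h], hpL i j h⟩
    · exact ⟨j, i, h, by simp [hPdef, not_lt.2 h.le], (hpL j i h).symm⟩
  have hPi : ∀ i j, i ≠ j → eval (P i j) (ℓ i) = 0 := by
    intro i j hij
    obtain ⟨a, b, _, h1, h2, _⟩ := hP i j hij
    rw [h1, h2]
  have hPj : ∀ i j, i ≠ j → eval (P i j) (ℓ j) = 0 := by
    intro i j hij
    obtain ⟨a, b, _, h1, _, h2⟩ := hP i j hij
    rw [h1, h2]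
  have hP0 : ∀ i j, i ≠ j → P i j ≠ 0 := by
    intro i j hij
    obtain ⟨a, b, hab, h1, _, _⟩ := hP i j hij
    rw [h1]
    exact hp0 a b hab
  have hPl : ∀ i j l, i ≠ j → i ≠ l → j ≠ l → eval (P i j) (ℓ l) ≠ 0 := by
    intro i j l hij hil hjl
    exact no_common ℓ hdeg hgen i j l hij hil hjl _ (hP0 i j hij) (hPi i j hij) (hPj i j hij)
  have hqP : ∀ i j, i ≠ j → ∀ b : kk, P i j ≠ b • q i := by
    intro i j hij c hc
    have h0 := hP0 i j hij
    obtain ⟨a, b, hab, h1, _, _⟩ := hP i j hij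
    apply hqp i a b hab
    refine ⟨c, ?_, h1 ▸ hc⟩
    rintro rfl
    rw [zero_smul] at hc
    exact h0 hc
  have main : ∀ k : ℕ, 1 ≤ k →
      alpha ((⨅ i : Fin s, pointIdeal (q i) ^ k) ⊓
        ⨅ (i : Fin s) (j : Fin s) (_ : i < j), pointIdeal (p i j) ^ (2 * k)) = s * k := by
    intro k hk
    have hmem : s * k ∈ {d : ℕ | ∃ f ∈ ((⨅ i : Fin s, pointIdeal (q i) ^ k) ⊓
        ⨅ (i : Fin s) (j : Fin s) (_ : i < j), pointIdeal (p i j) ^ (2 * k)),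
        f ≠ 0 ∧ MvPolynomial.IsHomogeneous f d} := by
      refine ⟨(∏ i, ℓ i) ^ k, ?_, pow_ne_zero _ (Finset.prod_ne_zero_iff.2 fun i _ => hℓ0 i), ?_⟩
      · simp only [Submodule.mem_inf, Submodule.mem_iInf]
        constructor
        · intro i
          apply Ideal.pow_mem_pow
          refine Ideal.mem_of_dvd _ (Finset.dvd_prod_of_mem ℓ (Finset.mem_univ i)) ?_
          exact Ideal.subset_span ⟨hdeg i, hqL i⟩
        · intro i j hij
          rw [pow_mul]
          apply Ideal.pow_mem_pow
          rw [← Finset.mul_prod_erase Finset.univ _ (Finset.mem_univ i),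
            ← Finset.mul_prod_erase (Finset.univ.erase i) _
              (Finset.mem_erase.2 ⟨hij.ne', Finset.mem_univ j⟩), ← mul_assoc]
          apply Ideal.mul_mem_right
          rw [pow_two]
          exact Ideal.mul_mem_mul (Ideal.subset_span ⟨hdeg i, (hpL i j hij).1⟩)
            (Ideal.subset_span ⟨hdeg j, (hpL i j hij).2⟩)
      · have := (IsHomogeneous.prod Finset.univ ℓ (fun _ => 1) (fun i _ => hdeg i)).pow k
        simpa using this
    apply le_antisymm
    · exact Nat.sInf_le hmem
    · apply le_csInf ⟨_, hmem⟩
      rintro d ⟨f, hf, hf0, hfd⟩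
      rw [← hfd.totalDegree hf0]
      simp only [Submodule.mem_inf, Submodule.mem_iInf] at hf
      apply star_bound hs ℓ hdeg hℓ0 P hPi hPj hPl q hq0 hqL hqP k f hf0
      intro i j hij
      obtain ⟨a, b, hab, h1, _, _⟩ := hP i j hij
      rw [h1]
      exact Phi_pow _ _ (hf.2 a b hab)
  refine ⟨main, ?_⟩
  have : ∀ k : ℕ+, (alpha ((⨅ i : Fin s, pointIdeal (q i) ^ (k : ℕ)) ⊓
        ⨅ (i : Fin s) (j : Fin s) (_ : i < j),
          pointIdeal (p i j) ^ (2 * (k : ℕ))) : ℝ) / ((k : ℕ) : ℝ) = (s : ℝ) := by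
    intro k
    rw [main k k.2]
    have : ((k : ℕ) : ℝ) ≠ 0 := by exact_mod_cast k.ne_zero
    push_cast
    field_simp
  simp only [this]
  exact ciInf_const
end
end

section
/- Let a and b be integers with 1 ≤ a < b. Then there exist an integer M and a fat flat subscheme W of P^M, i.e. finitely many pairwise incomparable linear subspaces V_1,…,V_t of P^M with positive multiplicities a_1,…,a_t and defining ideal I(W) = ⋂_i I(V_i)^{a_i}, such that the Waldschmidt constant of I(W) equals b/a. -/
noncomputable section

open MvPolynomial

/-- polynomials all of whose monomials have weight at least `n` -/
def ordIdeal {kk : Type*} [Field kk] {σ : Type*} {ι : Type*} [Fintype ι] (e : ι → σ) (n : ℕ) :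
    Ideal (MvPolynomial σ kk) where
  carrier := {p | ∀ m ∈ p.support, n ≤ ∑ i, m (e i)}
  zero_mem' := by simp
  add_mem' := by
    classical
    intro p q hp hq m hm
    rcases Finset.mem_union.1 (MvPolynomial.support_add hm) with h | h
    · exact hp m h
    · exact hq m h
  smul_mem' := by
    classical
    intro c p hp m hm
    obtain ⟨u, _, w, hw, rfl⟩ := Finset.mem_add.1 (MvPolynomial.support_mul c p hm)
    have := hp w hw
    simp only [Finsupp.add_apply, Finset.sum_add_distrib]
    omega

theorem span_pow_le_ordIdeal {kk : Type*} [Field kk] {σ : Type*} {ι : Type*} [Fintype ι]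
    (e : ι → σ) (n : ℕ) :
    (Ideal.span (Set.range (fun i => (X (e i) : MvPolynomial σ kk)))) ^ n ≤ ordIdeal e n := by
  classical
  induction n with
  | zero => intro p _ m _; exact Nat.zero_le _
  | succ n ih =>
    rw [pow_succ, Ideal.mul_le]
    intro p hp q hq
    have h1 : Ideal.span (Set.range (fun i => (X (e i) : MvPolynomial σ kk))) ≤ ordIdeal e 1 := by
      rw [Ideal.span_le]
      rintro _ ⟨i, rfl⟩ m hm
      rw [MvPolynomial.support_X, Finset.mem_singleton] at hm
      subst hm
      refine le_trans ?_ (Finset.single_le_sum (fun _ _ => Nat.zero_le _) (Finset.mem_univ i))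
      simp
    intro m hm
    obtain ⟨u, hu, w, hw, rfl⟩ := Finset.mem_add.1 (MvPolynomial.support_mul p q hm)
    have := ih hp u hu
    have := h1 hq w hw
    simp only [Finsupp.add_apply, Finset.sum_add_distrib]
    omega

theorem cyc_inj {M a : ℕ} (hab : a < M + 1) (j : Fin (M + 1)) :
    Function.Injective (fun i : Fin a => j + Fin.ofNat (M + 1) (i : ℕ)) := by
  intro i i' h
  have h := add_left_cancel h
  have h2 := congrArg Fin.val h
  simp only [Fin.ofNat] at h2
  rw [Nat.mod_eq_of_lt (by omega), Nat.mod_eq_of_lt (by omega)] at h2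
  exact Fin.ext h2

theorem cyc_subset {M a : ℕ} (ha : 1 ≤ a) (hab : a < M + 1) (j j' : Fin (M + 1))
    (h : ∀ i : Fin a, ∃ i' : Fin a, j' + Fin.ofNat (M + 1) (i' : ℕ)
      = j + Fin.ofNat (M + 1) (i : ℕ)) : j = j' := by
  obtain ⟨s, hs⟩ := h ⟨0, ha⟩
  have hs' : j = j' + Fin.ofNat (M + 1) (s : ℕ) := by
    rw [hs]; apply Fin.ext; simp
  by_cases h0 : (s : ℕ) = 0
  · rw [hs', h0]; apply Fin.ext; simp
  · exfalso
    obtain ⟨r, hr⟩ := h ⟨a - s, by omega⟩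
    rw [hs', add_assoc] at hr
    have h2 := congrArg Fin.val (add_left_cancel hr)
    have := s.2
    have := r.2
    simp only [Fin.ofNat, Fin.val_add] at h2
    rw [Nat.mod_eq_of_lt (by omega : (r : ℕ) < M + 1), Nat.mod_eq_of_lt (by omega : (s : ℕ) < M + 1),
      Nat.mod_eq_of_lt (by omega : a - (s : ℕ) < M + 1), Nat.mod_eq_of_lt (by omega)] at h2
    omega

theorem prod_mem_pow {kk : Type*} [Field kk] {M a : ℕ} (hab : a < M + 1) (j : Fin (M + 1)) :
    (∏ i, X i : MvPolynomial (Fin (M + 1)) kk) ∈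
      (Ideal.span (Set.range (fun i : Fin a =>
        (X (j + Fin.ofNat (M + 1) (i : ℕ)) : MvPolynomial (Fin (M + 1)) kk)))) ^ a := by
  classical
  set I := Ideal.span (Set.range (fun i : Fin a =>
        (X (j + Fin.ofNat (M + 1) (i : ℕ)) : MvPolynomial (Fin (M + 1)) kk)))
  have h1 : (∏ i : Fin a, X (j + Fin.ofNat (M + 1) (i : ℕ)) : MvPolynomial (Fin (M + 1)) kk)
      ∈ I ^ a := by
    have := Ideal.prod_mem_prod (s := Finset.univ) (I := fun _ : Fin a => I)
      (x := fun i : Fin a => (X (j + Fin.ofNat (M + 1) (i : ℕ)) : MvPolynomial (Fin (M + 1)) kk))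
      (fun i _ => Ideal.subset_span ⟨i, rfl⟩)
    simpa using this
  refine Ideal.mem_of_dvd _ ?_ h1
  have h2 := Finset.prod_image (s := Finset.univ)
    (f := fun i => (X i : MvPolynomial (Fin (M + 1)) kk))
    (g := fun i : Fin a => j + Fin.ofNat (M + 1) (i : ℕ)) ((cyc_inj hab j).injOn)
  rw [← h2]
  exact Finset.prod_dvd_prod_of_subset _ _ _ (Finset.subset_univ _)

/-- Let `a` and `b` be integers with `1 ≤ a < b`.  Then there exist an
integer `M` and a fat flat subscheme `W` of `ℙ^M`: finitely many pairwise incomparable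
linear subspaces `V_1, …, V_t` (here `V_j` has codimension `c j` and is cut out by the
linearly independent linear forms `v j 0, …`) with positive multiplicities `a_1, …, a_t`
and defining ideal `I(W) = ⋂_j I(V_j)^{a_j}`, whose `k`-th symbolic power is
`⋂_j I(V_j)^{k·a_j}`, such that the Waldschmidt constant of `I(W)` equals `b / a`. -/
theorem exists_fat_flat_subscheme_waldschmidt_eq_rat
    {kk : Type*} [Field kk] [IsAlgClosed kk]
    (a b : ℕ) (ha : 1 ≤ a) (hab : a < b) :
    ∃ (M : ℕ) (t : ℕ) (c : Fin t → ℕ)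
      (v : (j : Fin t) → Fin (c j) → MvPolynomial (Fin (M + 1)) kk)
      (mult : Fin t → ℕ),
      1 ≤ t ∧
      (∀ j, 1 ≤ c j ∧ c j ≤ M) ∧
      (∀ j i, (v j i).IsHomogeneous 1) ∧
      (∀ j, LinearIndependent kk (v j)) ∧
      (∀ j j', j ≠ j' →
        ¬ Ideal.span (Set.range (v j)) ≤ Ideal.span (Set.range (v j'))) ∧
      (∀ j, 1 ≤ mult j) ∧
      (⨅ k : ℕ+, (alpha (⨅ j : Fin t,
          (Ideal.span (Set.range (v j))) ^ ((k : ℕ) * mult j)) : ℝ) / ((k : ℕ) : ℝ)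
        = (b : ℝ) / (a : ℝ)) := by
  obtain ⟨M, rfl⟩ : ∃ M, b = M + 1 := ⟨b - 1, by omega⟩
  have hP0 : (∏ i, X i : MvPolynomial (Fin (M + 1)) kk) ≠ 0 :=
    Finset.prod_ne_zero_iff.2 fun i _ => X_ne_zero i
  have hPh : (∏ i, X i : MvPolynomial (Fin (M + 1)) kk).IsHomogeneous (M + 1) := by
    have := IsHomogeneous.prod (Finset.univ) (fun i => (X i : MvPolynomial (Fin (M + 1)) kk))
      (fun _ => 1) (fun i _ => isHomogeneous_X kk i)
    simpa using this
  refine ⟨M, M + 1, fun _ => a, fun j i => X (j + Fin.ofNat (M + 1) (i : ℕ)), fun _ => 1,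
    by omega, fun _ => ⟨ha, Nat.lt_succ_iff.1 hab⟩, fun _ _ => isHomogeneous_X _ _, ?_, ?_, fun _ => le_rfl, ?_⟩
  · intro j
    exact (MvPolynomial.linearIndependent_X (Fin (M + 1)) kk).comp _ (cyc_inj hab j)
  · intro j j' hne hle
    apply hne
    apply cyc_subset ha hab
    intro i
    have h1 : (X (j + Fin.ofNat (M + 1) (i : ℕ)) : MvPolynomial (Fin (M + 1)) kk) ∈
        Ideal.span (Set.range (fun i : Fin a =>
        (X (j' + Fin.ofNat (M + 1) (i : ℕ)) : MvPolynomial (Fin (M + 1)) kk))) :=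
      hle (Ideal.subset_span ⟨i, rfl⟩)
    rw [← pow_one (Ideal.span _)] at h1
    have h2 := span_pow_le_ordIdeal _ _ h1 (Finsupp.single (j + Fin.ofNat (M + 1) (i : ℕ)) 1)
      (by simp [MvPolynomial.support_X])
    by_contra hcon
    push Not at hcon
    rw [Finset.sum_eq_zero] at h2
    · omega
    · intro i' _
      exact Finsupp.single_eq_of_ne (hcon i')
  · have ha0 : (0 : ℝ) < a := by exact_mod_cast ha
    apply le_antisymm
    · refine (ciInf_le ⟨0, ?_⟩ (⟨a, ha⟩ : ℕ+)).trans ?_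
      · rintro _ ⟨k, rfl⟩
        positivity
      · simp only [PNat.mk_coe]
        gcongr
        refine Nat.sInf_le ⟨_, ?_, hP0, hPh⟩
        rw [Ideal.mem_iInf]
        intro j
        rw [mul_one]
        exact prod_mem_pow hab j
    · refine le_ciInf fun k => ?_
      have hk : (0 : ℝ) < (k : ℕ) := by exact_mod_cast k.2
      rw [div_le_div_iff₀ ha0 hk]
      norm_cast
      have hne : {d : ℕ | ∃ f ∈ (⨅ j : Fin (M + 1), (Ideal.span (Set.range (fun i : Fin a =>
          (X (j + Fin.ofNat (M + 1) (i : ℕ)) : MvPolynomial (Fin (M + 1)) kk)))) ^ ((k : ℕ) * 1)),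
          f ≠ 0 ∧ MvPolynomial.IsHomogeneous f d}.Nonempty := by
        refine ⟨_, _, ?_, pow_ne_zero k hP0, hPh.pow k⟩
        rw [Ideal.mem_iInf]
        intro j
        rw [mul_one]
        exact Ideal.pow_mem_pow (Ideal.pow_le_self (Nat.one_le_iff_ne_zero.1 ha) (prod_mem_pow hab j)) k
      obtain ⟨f, hf, hf0, hfh⟩ := Nat.sInf_mem hne
      change IsHomogeneous f (alpha _) at hfh
      set d := alpha (⨅ j : Fin (M + 1), (Ideal.span (Set.range (fun i : Fin a =>
          (X (j + Fin.ofNat (M + 1) (i : ℕ)) : MvPolynomial (Fin (M + 1)) kk)))) ^ ((k : ℕ) * 1))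
      obtain ⟨m, hm⟩ := MvPolynomial.support_nonempty.2 hf0
      have hd : ∑ i, m i = d := by
        rw [hfh.degree_eq_sum_deg_support hm]
        exact (Finset.sum_subset (Finset.subset_univ _) (by simp)).symm
      have h1 : ∀ j : Fin (M + 1), (k : ℕ) ≤ ∑ i : Fin a, m (j + Fin.ofNat (M + 1) (i : ℕ)) := by
        intro j
        have := span_pow_le_ordIdeal _ _ ((Ideal.mem_iInf.1 hf) j) m hm
        simpa using this
      have h2 := Finset.sum_le_sum (fun j (_ : j ∈ Finset.univ) => h1 j)
      rw [Finset.sum_comm] at h2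
      have h3 : ∀ i : Fin a, ∑ j, m (j + Fin.ofNat (M + 1) (i : ℕ)) = d := by
        intro i
        rw [← hd]
        exact Equiv.sum_comp (Equiv.addRight (Fin.ofNat (M + 1) (i : ℕ))) m
      simp only [h3] at h2
      simp at h2
      rw [mul_comm d a]
      exact h2
end
end

section
/- Let L_1 and L_2 be two distinct lines in P^2 meeting at a point q. Let p_1, p_2 be distinct points of L_2 \ {q} and p_3, p_4 distinct points of L_1 \ {q}, and let Z = 2p_1 + p_2 + p_3 + p_4 be the fat points scheme with a double point at p_1 and simple points at p_2, p_3, p_4. Then the Waldschmidt constant of I(Z) equals 5/2. -/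
noncomputable section

open MvPolynomial

theorem wd_lin_exists {kk : Type*} [Field kk] (f : MvPolynomial (Fin 3) kk)
    (hf : f.IsHomogeneous 1) : ∃ a : Fin 3 → kk, f = ∑ i, C (a i) * X i := by
  have h : f ∈ homogeneousSubmodule (Fin 3) kk 1 := hf
  rw [homogeneousSubmodule_one_eq_span_X, Submodule.mem_span_range_iff_exists_fun] at h
  obtain ⟨c, hc⟩ := h
  exact ⟨c, by rw [← hc]; simp [MvPolynomial.smul_eq_C_mul]⟩

theorem wd_lin_hom {kk : Type*} [Field kk] (a : Fin 3 → kk) :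
    (∑ i, C (a i) * X i : MvPolynomial (Fin 3) kk).IsHomogeneous 1 :=
  IsHomogeneous.sum _ _ _ fun i _ => isHomogeneous_C_mul_X _ _

theorem wd_lin_eval {kk : Type*} [Field kk] (a p : Fin 3 → kk) :
    eval p (∑ i, C (a i) * X i : MvPolynomial (Fin 3) kk) = a ⬝ᵥ p := by
  simp [dotProduct]

theorem wd_lin_ne {kk : Type*} [Field kk] (a : Fin 3 → kk) (ha : a ≠ 0) :
    (∑ i, C (a i) * X i : MvPolynomial (Fin 3) kk) ≠ 0 := by
  intro h
  apply ha
  funext j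
  have := congrArg (eval (Pi.single j 1)) h
  rw [wd_lin_eval] at this
  simpa using this

theorem wd_dvd {kk : Type*} [Field kk] (p : Fin 3 → kk) (φ : Fin 3 → Polynomial kk)
    (h l : Polynomial kk) (H : ∀ i, l ∣ φ i - Polynomial.C (p i) * h)
    (n : ℕ) (f : MvPolynomial (Fin 3) kk) (hf : f ∈ pointIdeal p ^ n) :
    l ^ n ∣ aeval φ f := by
  have h1 : Ideal.map (aeval φ : MvPolynomial (Fin 3) kk →ₐ[kk] Polynomial kk) (pointIdeal p)
      ≤ Ideal.span {l} := by
    rw [pointIdeal, Ideal.map_span, Ideal.span_le]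
    rintro _ ⟨g, ⟨hg, hg0⟩, rfl⟩
    obtain ⟨a, rfl⟩ := wd_lin_exists g hg
    rw [wd_lin_eval] at hg0
    rw [SetLike.mem_coe, Ideal.mem_span_singleton]
    have e : aeval φ (∑ i, C (a i) * X i : MvPolynomial (Fin 3) kk)
        = ∑ i, Polynomial.C (a i) * (φ i - Polynomial.C (p i) * h) := by
      have : (∑ i, Polynomial.C (a i) * (φ i - Polynomial.C (p i) * h))
          = ∑ i, Polynomial.C (a i) * φ i - Polynomial.C (a ⬝ᵥ p) * h := by
        simp [dotProduct, Fin.sum_univ_three]; ring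
      rw [this, hg0]
      simp [Polynomial.algebraMap_eq]
    rw [e]
    exact Finset.dvd_sum fun i _ => Dvd.dvd.mul_left (H i) _
  have h2 := Ideal.mem_map_of_mem
    (aeval φ : MvPolynomial (Fin 3) kk →ₐ[kk] Polynomial kk) hf
  rw [Ideal.map_pow] at h2
  have h3 := Ideal.pow_right_mono h1 n h2
  rwa [Ideal.span_singleton_pow, Ideal.mem_span_singleton] at h3

theorem wd_eval_smul {kk : Type*} [Field kk] (f : MvPolynomial (Fin 3) kk) (d : ℕ)
    (hf : f.IsHomogeneous d) (s : kk) (P : Fin 3 → kk) :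
    eval (s • P) f = s ^ d * eval P f := by
  rw [eval_eq, eval_eq, Finset.mul_sum]
  refine Finset.sum_congr rfl fun m hm => ?_
  have := hf (mem_support_iff.1 hm)
  rw [← this]
  simp only [Pi.smul_apply, smul_eq_mul, mul_pow, Finset.prod_mul_distrib]
  rw [Finset.prod_pow_eq_pow_sum]
  have e : ∑ i ∈ m.support, m i = (Finsupp.weight 1) m := by
    simp [Finsupp.weight_apply, Finsupp.sum]
  rw [e]; ring

theorem wd_lower {kk : Type*} [Field kk] [IsAlgClosed kk] (p₁ p₂ p₃ p₄ : Fin 3 → kk)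
    (a b c : kk) (ha : a ≠ 0) (hb : b ≠ 0) (hc : c ≠ 0)
    (h4 : p₄ = a • p₁ + b • p₂ + c • p₃)
    (hs : ∀ P : Fin 3 → kk, ∃ x y z : kk, P = x • p₁ + y • p₂ + z • p₃)
    (k d : ℕ) (f : MvPolynomial (Fin 3) kk) (hf0 : f ≠ 0) (hd : f.IsHomogeneous d)
    (h1 : f ∈ pointIdeal p₁ ^ (2 * k)) (h2 : f ∈ pointIdeal p₂ ^ k)
    (h3 : f ∈ pointIdeal p₃ ^ k) (h4' : f ∈ pointIdeal p₄ ^ k) : 5 * k ≤ 2 * d := by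
  haveI : Infinite kk := IsAlgClosed.instInfinite
  have hne : ∀ g : MvPolynomial (Fin 3) kk, g ≠ 0 → ∃ P, eval P g ≠ 0 := by
    intro g hg
    by_contra! hcon
    exact hg (MvPolynomial.funext fun x => by simp [hcon x])
  -- pull back of f to the adapted coordinates
  let A : Fin 3 → MvPolynomial (Fin 3) kk := fun i =>
    C (a * p₁ i) * X 0 + C (b * p₂ i) * X 1 + C (c * p₃ i) * X 2
  have hA : ∀ w : Fin 3 → kk, eval w (aeval A f)
      = eval ((w 0 * a) • p₁ + (w 1 * b) • p₂ + (w 2 * c) • p₃) f := by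
    intro w
    rw [← MvPolynomial.coe_aeval_eq_eval, ← MvPolynomial.coe_aeval_eq_eval]
    simp only [RingHom.coe_coe]
    rw [← AlgHom.comp_apply, MvPolynomial.comp_aeval]
    congr 2
    funext i
    simp [A]; ring
  have hG : aeval A f ≠ 0 := by
    obtain ⟨P, hP⟩ := hne f hf0
    obtain ⟨x, y, z, rfl⟩ := hs P
    intro h0
    have := hA ![x / a, y / b, z / c]
    rw [h0] at this
    simp only [Matrix.cons_val, map_zero] at this
    rw [div_mul_cancel₀ _ ha, div_mul_cancel₀ _ hb, div_mul_cancel₀ _ hc] at this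
    exact hP this.symm
  have hq : ∀ (g : MvPolynomial (Fin 3) kk) (w : Fin 3 → kk), eval w g ≠ 0 → g ≠ 0 := by
    rintro g w h rfl; simp at h
  have hX : ∀ i : Fin 3, (X i : MvPolynomial (Fin 3) kk) ≠ 0 := fun i => X_ne_zero i
  have d01 : (X 0 - X 1 : MvPolynomial (Fin 3) kk) ≠ 0 := hq _ ![1, 0, 0] (by simp)
  have d12 : (X 1 - X 2 : MvPolynomial (Fin 3) kk) ≠ 0 := hq _ ![0, 1, 0] (by simp)
  have d02 : (X 0 - X 2 : MvPolynomial (Fin 3) kk) ≠ 0 := hq _ ![1, 0, 0] (by simp)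
  have e01 : (X 0 * X 1 - 1 : MvPolynomial (Fin 3) kk) ≠ 0 := hq _ 0 (by simp)
  have e12 : (X 1 * X 2 - 1 : MvPolynomial (Fin 3) kk) ≠ 0 := hq _ 0 (by simp)
  have e02 : (X 0 * X 2 - 1 : MvPolynomial (Fin 3) kk) ≠ 0 := hq _ 0 (by simp)
  obtain ⟨w, hw⟩ := hne _ (mul_ne_zero hG (mul_ne_zero (mul_ne_zero (hX 0) (mul_ne_zero (hX 1) (hX 2)))
    (mul_ne_zero (mul_ne_zero d01 (mul_ne_zero d12 d02)) (mul_ne_zero e01 (mul_ne_zero e12 e02)))))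
  rw [map_mul, hA] at hw
  simp only [map_mul, map_sub, map_one, eval_X] at hw
  generalize w 0 = x at hw
  generalize w 1 = y at hw
  generalize w 2 = z at hw
  simp only [mul_ne_zero_iff, sub_ne_zero] at hw
  obtain ⟨hw, ⟨hx, hy, hz⟩, ⟨hxy, hyz, hxz⟩, gxy, gyz, gxz⟩ := hw
  let l : kk → Polynomial kk := fun v => Polynomial.C v * Polynomial.X + 1
  let l1 := l (y * z - 1)
  let l2 := l (x * z - 1)
  let l3 := l (x * y - 1)
  have hl : ∀ v, l v = Polynomial.C v * Polynomial.X + 1 := fun _ => rfl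
  let φ : Fin 3 → Polynomial kk := fun i =>
    Polynomial.C (a * p₁ i) * (l2 * l3) + Polynomial.C (b * p₂ i) * (l1 * l3)
      + Polynomial.C (c * p₃ i) * (l1 * l2)
  have D1 : l1 ^ (2 * k) ∣ aeval φ f := by
    refine wd_dvd p₁ φ (Polynomial.C a * (l2 * l3)) l1 (fun i => ?_) _ f h1
    refine ⟨Polynomial.C (b * p₂ i) * l3 + Polynomial.C (c * p₃ i) * l2, ?_⟩
    simp only [φ, Polynomial.C_mul]; ring
  have D2 : l2 ^ k ∣ aeval φ f := by
    refine wd_dvd p₂ φ (Polynomial.C b * (l1 * l3)) l2 (fun i => ?_) _ f h2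
    refine ⟨Polynomial.C (a * p₁ i) * l3 + Polynomial.C (c * p₃ i) * l1, ?_⟩
    simp only [φ, Polynomial.C_mul]; ring
  have D3 : l3 ^ k ∣ aeval φ f := by
    refine wd_dvd p₃ φ (Polynomial.C c * (l1 * l2)) l3 (fun i => ?_) _ f h3
    refine ⟨Polynomial.C (a * p₁ i) * l2 + Polynomial.C (b * p₂ i) * l1, ?_⟩
    simp only [φ, Polynomial.C_mul]; ring
  have D4 : Polynomial.X ^ k ∣ aeval φ f := by
    refine wd_dvd p₄ φ 1 Polynomial.X (fun i => ?_) _ f h4'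
    rw [Polynomial.X_dvd_iff, Polynomial.coeff_zero_eq_eval_zero]
    simp [φ, l1, l2, l3, l, h4]
  have hF0 : aeval φ f ≠ 0 := by
    intro h0
    have e : Polynomial.eval 1 (aeval φ f) = eval
      ((x * y * z) • ((x * a) • p₁ + (y * b) • p₂ + (z * c) • p₃)) f := by
      rw [← MvPolynomial.coe_aeval_eq_eval, ← Polynomial.coe_aeval_eq_eval]
      simp only [RingHom.coe_coe]
      rw [← AlgHom.comp_apply, MvPolynomial.comp_aeval]
      congr 2
      funext i
      simp [φ, l1, l2, l3, l]; ring
    rw [h0, wd_eval_smul f d hd] at e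
    simp [hx, hy, hz] at e
    exact hw e
  have hdeg : (aeval φ f).natDegree ≤ d * 2 := by
    apply MvPolynomial.aeval_natDegree_le f hd.totalDegree_le
    intro i
    simp only [φ, l1, l2, l3, l]
    compute_degree
  have cop : ∀ u v : kk, u ≠ v → IsCoprime (l u) (l v) := by
    intro u v huv
    have : u - v ≠ 0 := sub_ne_zero.2 huv
    refine ⟨-Polynomial.C (v / (u - v)), Polynomial.C (u / (u - v)), ?_⟩
    have e1 : Polynomial.C (u / (u - v)) = Polynomial.C u * Polynomial.C (1 / (u - v)) := by
      rw [← Polynomial.C_mul]; ring_nf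
    have e2 : Polynomial.C (v / (u - v)) = Polynomial.C v * Polynomial.C (1 / (u - v)) := by
      rw [← Polynomial.C_mul]; ring_nf
    have e3 : (Polynomial.C u - Polynomial.C v) * Polynomial.C (1 / (u - v)) = 1 := by
      rw [← Polynomial.C_sub, ← Polynomial.C_mul, mul_one_div_cancel this, Polynomial.C_1]
    rw [e1, e2, hl, hl]
    linear_combination e3
  have copX : ∀ u : kk, IsCoprime (l u) Polynomial.X := by
    intro u
    exact ⟨1, -Polynomial.C u, by rw [hl]; ring⟩
  have c12 : IsCoprime l1 l2 := cop _ _ fun h => hxy (mul_right_cancel₀ hz (sub_left_inj.1 h)).symm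
  have c13 : IsCoprime l1 l3 := cop _ _ fun h => hxz
    (mul_left_cancel₀ hy (by have := sub_left_inj.1 h; linear_combination -this))
  have c23 : IsCoprime l2 l3 := cop _ _ fun h => hyz (mul_left_cancel₀ hx (sub_left_inj.1 h)).symm
  have T : l1 ^ (2 * k) * (l2 ^ k * (l3 ^ k * Polynomial.X ^ k)) ∣ aeval φ f := by
    refine IsCoprime.mul_dvd ?_ D1 (IsCoprime.mul_dvd ?_ D2 (IsCoprime.mul_dvd ?_ D3 D4))
    · exact (c12.pow).mul_right ((c13.pow).mul_right (copX _).pow)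
    · exact (c23.pow).mul_right (copX _).pow
    · exact (copX _).pow
  have ld : ∀ v : kk, v ≠ 0 → (l v).natDegree = 1 := by
    intro v hv
    rw [hl, ← Polynomial.C_1]
    exact Polynomial.natDegree_linear hv
  have ln : ∀ v : kk, v ≠ 0 → l v ≠ 0 := by
    intro v hv h0
    have := ld v hv
    rw [h0] at this; simp at this
  have n1 := ln _ (sub_ne_zero.2 gyz)
  have n2 := ln _ (sub_ne_zero.2 gxz)
  have n3 := ln _ (sub_ne_zero.2 gxy)
  have TT := Polynomial.natDegree_le_of_dvd T hF0
  rw [Polynomial.natDegree_mul (pow_ne_zero _ n1) (mul_ne_zero (pow_ne_zero _ n2)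
      (mul_ne_zero (pow_ne_zero _ n3) (pow_ne_zero _ Polynomial.X_ne_zero))),
    Polynomial.natDegree_mul (pow_ne_zero _ n2)
      (mul_ne_zero (pow_ne_zero _ n3) (pow_ne_zero _ Polynomial.X_ne_zero)),
    Polynomial.natDegree_mul (pow_ne_zero _ n3) (pow_ne_zero _ Polynomial.X_ne_zero),
    Polynomial.natDegree_pow, Polynomial.natDegree_pow, Polynomial.natDegree_pow,
    Polynomial.natDegree_pow, ld _ (sub_ne_zero.2 gyz), ld _ (sub_ne_zero.2 gxz),
    ld _ (sub_ne_zero.2 gxy), Polynomial.natDegree_X] at TT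
  omega

theorem wd_cross {kk : Type*} [Field kk] (u v : Fin 3 → kk) (hu : u ≠ 0) (hv : v ≠ 0)
    (h : crossProduct u v = 0) : projEq u v := by
  have := mt crossProduct_ne_zero_iff_linearIndependent.2 (not_not.2 h)
  rw [LinearIndependent.pair_iff' hu] at this
  push Not at this
  obtain ⟨c, hc⟩ := this
  refine ⟨c, ?_, hc.symm⟩
  rintro rfl
  exact hv (by simpa using hc.symm)

theorem wd_symm {kk : Type*} [Field kk] {u v : Fin 3 → kk} (h : projEq u v) : projEq v u := by
  obtain ⟨c, hc, rfl⟩ := h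
  exact ⟨c⁻¹, inv_ne_zero hc, by rw [smul_smul, inv_mul_cancel₀ hc, one_smul]⟩

theorem wd_trans {kk : Type*} [Field kk] {u v w : Fin 3 → kk} (h : projEq u v)
    (h' : projEq v w) : projEq u w := by
  obtain ⟨c, hc, rfl⟩ := h
  obtain ⟨e, he, rfl⟩ := h'
  exact ⟨e * c, mul_ne_zero he hc, by rw [smul_smul]⟩

theorem wd_meet {kk : Type*} [Field kk] (a b : Fin 3 → kk) (hab : crossProduct a b ≠ 0)
    (x q : Fin 3 → kk) (hx : x ≠ 0) (hq : q ≠ 0) (hax : a ⬝ᵥ x = 0) (hbx : b ⬝ᵥ x = 0)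
    (haq : a ⬝ᵥ q = 0) (hbq : b ⬝ᵥ q = 0) : projEq x q := by
  have key : ∀ y : Fin 3 → kk, y ≠ 0 → a ⬝ᵥ y = 0 → b ⬝ᵥ y = 0 →
      projEq (crossProduct a b) y := by
    intro y hy h1 h2
    apply wd_cross _ _ hab hy
    rw [cross_cross_eq_smul_sub_smul, h1, h2]; simp
  exact wd_trans (wd_symm (key x hx hax hbx)) (key q hq haq hbq)

theorem wd_line {kk : Type*} [Field kk] (u v : Fin 3 → kk) (hu : u ≠ 0) (hv : v ≠ 0)
    (h : ¬ projEq u v) : ∃ m : MvPolynomial (Fin 3) kk, m ≠ 0 ∧ m.IsHomogeneous 1 ∧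
      m ∈ pointIdeal u ∧ m ∈ pointIdeal v := by
  refine ⟨∑ i, C (crossProduct u v i) * X i, wd_lin_ne _ fun h0 => h (wd_cross u v hu hv h0),
    wd_lin_hom _, Ideal.subset_span ⟨wd_lin_hom _, ?_⟩, Ideal.subset_span ⟨wd_lin_hom _, ?_⟩⟩
  · rw [wd_lin_eval, dotProduct_comm, dot_self_cross]
  · rw [wd_lin_eval, dotProduct_comm, dot_cross_self]

/-- Let `L₁ = {ℓ₁ = 0}` and `L₂ = {ℓ₂ = 0}` be two distinct lines of `ℙ²`
meeting at the point `q`.  Let `p₁, p₂` be distinct points of `L₂ \ {q}` and `p₃, p₄`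
distinct points of `L₁ \ {q}`, and let `Z = 2p₁ + p₂ + p₃ + p₄`.  Then the Waldschmidt
constant of `I(Z)` equals `5/2`. -/
theorem waldschmidt_double_point_on_conic
    {kk : Type*} [Field kk] [IsAlgClosed kk]
    (ℓ₁ ℓ₂ : MvPolynomial (Fin 3) kk)
    (hl1 : ℓ₁ ≠ 0) (hl2 : ℓ₂ ≠ 0)
    (hd1 : ℓ₁.IsHomogeneous 1) (hd2 : ℓ₂.IsHomogeneous 1)
    (hne : ¬ ∃ c : kk, c ≠ 0 ∧ ℓ₂ = c • ℓ₁)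
    (q : Fin 3 → kk) (hq0 : q ≠ 0)
    (hq1 : MvPolynomial.eval q ℓ₁ = 0) (hq2 : MvPolynomial.eval q ℓ₂ = 0)
    (p₁ p₂ p₃ p₄ : Fin 3 → kk)
    (hp10 : p₁ ≠ 0) (hp20 : p₂ ≠ 0) (hp30 : p₃ ≠ 0) (hp40 : p₄ ≠ 0)
    (hp1L : MvPolynomial.eval p₁ ℓ₂ = 0) (hp2L : MvPolynomial.eval p₂ ℓ₂ = 0)
    (hp3L : MvPolynomial.eval p₃ ℓ₁ = 0) (hp4L : MvPolynomial.eval p₄ ℓ₁ = 0)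
    (hp1q : ¬ projEq p₁ q) (hp2q : ¬ projEq p₂ q)
    (hp3q : ¬ projEq p₃ q) (hp4q : ¬ projEq p₄ q)
    (hp12 : ¬ projEq p₁ p₂) (hp34 : ¬ projEq p₃ p₄) :
    (⨅ k : ℕ+, (alpha (pointIdeal p₁ ^ (2 * (k : ℕ)) ⊓ pointIdeal p₂ ^ (k : ℕ) ⊓
        pointIdeal p₃ ^ (k : ℕ) ⊓ pointIdeal p₄ ^ (k : ℕ)) : ℝ) / ((k : ℕ) : ℝ))
      = 5 / 2 := by
  obtain ⟨A, rfl⟩ := wd_lin_exists ℓ₁ hd1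
  obtain ⟨B, rfl⟩ := wd_lin_exists ℓ₂ hd2
  have m1 : (∑ i, C (B i) * X i : MvPolynomial (Fin 3) kk) ∈ pointIdeal p₁ :=
    Ideal.subset_span ⟨hd2, hp1L⟩
  have m2 : (∑ i, C (B i) * X i : MvPolynomial (Fin 3) kk) ∈ pointIdeal p₂ :=
    Ideal.subset_span ⟨hd2, hp2L⟩
  have m3 : (∑ i, C (A i) * X i : MvPolynomial (Fin 3) kk) ∈ pointIdeal p₃ :=
    Ideal.subset_span ⟨hd1, hp3L⟩
  have m4 : (∑ i, C (A i) * X i : MvPolynomial (Fin 3) kk) ∈ pointIdeal p₄ :=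
    Ideal.subset_span ⟨hd1, hp4L⟩
  rw [wd_lin_eval] at hq1 hq2 hp1L hp2L hp3L hp4L
  have hA : A ≠ 0 := by rintro rfl; simp at hl1
  have hB : B ≠ 0 := by rintro rfl; simp at hl2
  have hAB : crossProduct A B ≠ 0 := by
    intro h
    obtain ⟨c, hc, e⟩ := wd_cross A B hA hB h
    exact hne ⟨c, hc, by rw [e]; simp [MvPolynomial.smul_eq_C_mul, Finset.mul_sum, mul_assoc]⟩
  have n1 : A ⬝ᵥ p₁ ≠ 0 := fun h => hp1q (wd_meet A B hAB p₁ q hp10 hq0 h hp1L hq1 hq2)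
  have n2 : A ⬝ᵥ p₂ ≠ 0 := fun h => hp2q (wd_meet A B hAB p₂ q hp20 hq0 h hp2L hq1 hq2)
  have n3 : B ⬝ᵥ p₃ ≠ 0 := fun h => hp3q (wd_meet A B hAB p₃ q hp30 hq0 hp3L h hq1 hq2)
  have n4 : B ⬝ᵥ p₄ ≠ 0 := fun h => hp4q (wd_meet A B hAB p₄ q hp40 hq0 hp4L h hq1 hq2)
  have hli : LinearIndependent kk ![p₁, p₂, p₃] := by
    rw [Fintype.linearIndependent_iff]
    intro g hg
    simp only [Fin.sum_univ_three, Matrix.cons_val] at hg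
    have hB0 := congrArg (fun v => B ⬝ᵥ v) hg
    simp only [dotProduct_add, dotProduct_smul, hp1L, hp2L, dotProduct_zero, smul_eq_mul,
      mul_zero, zero_add, mul_eq_zero, n3, or_false] at hB0
    rw [hB0, zero_smul, add_zero] at hg
    have hl : LinearIndependent kk ![p₁, p₂] :=
      crossProduct_ne_zero_iff_linearIndependent.1 fun h => hp12 (wd_cross _ _ hp10 hp20 h)
    obtain ⟨h0, h1⟩ := LinearIndependent.pair_iff.1 hl _ _ hg
    intro i
    fin_cases i
    · exact h0
    · exact h1
    · exact hB0
  have hs : ∀ P : Fin 3 → kk, ∃ x y z : kk, P = x • p₁ + y • p₂ + z • p₃ := by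
    intro P
    have ht := hli.span_eq_top_of_card_eq_finrank' (by simp)
    have hP : P ∈ Submodule.span kk (Set.range ![p₁, p₂, p₃]) := by rw [ht]; trivial
    rw [Submodule.mem_span_range_iff_exists_fun] at hP
    obtain ⟨c, hc⟩ := hP
    exact ⟨c 0, c 1, c 2, by rw [← hc]; simp [Fin.sum_univ_three]⟩
  obtain ⟨a, b, c, h4⟩ := hs p₄
  have eA := congrArg (fun v => A ⬝ᵥ v) h4
  have eB := congrArg (fun v => B ⬝ᵥ v) h4
  simp only [dotProduct_add, dotProduct_smul, hp1L, hp2L, hp3L, hp4L, smul_eq_mul,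
      mul_zero, zero_add, add_zero] at eA eB
  have hc : c ≠ 0 := by rintro rfl; simp at eB; exact n4 eB
  have ha : a ≠ 0 := by
    rintro rfl
    have : b = 0 := by simpa [n2] using eA.symm
    subst this
    exact hp34 ⟨c, hc, by simpa using h4⟩
  have hb : b ≠ 0 := by
    rintro rfl
    have : a = 0 := by simpa [n1] using eA.symm
    exact ha this
  have q13 : ¬ projEq p₁ p₃ := by
    rintro ⟨c, hc, rfl⟩
    exact n3 (by simp [hp1L])
  have q14 : ¬ projEq p₁ p₄ := by
    rintro ⟨c, hc, e⟩
    exact n4 (by simp [e, hp1L])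
  obtain ⟨M, hM0, hMd, hM1, hM3⟩ := wd_line p₁ p₃ hp10 hp30 q13
  obtain ⟨N, hN0, hNd, hN1, hN4⟩ := wd_line p₁ p₄ hp10 hp40 q14
  generalize (∑ i, C (A i) * X i : MvPolynomial (Fin 3) kk) = ℓ₁ at *
  generalize (∑ i, C (B i) * X i : MvPolynomial (Fin 3) kk) = ℓ₂ at *
  have hF0 : ℓ₂ ^ 2 * ℓ₁ * M * N ≠ 0 :=
    mul_ne_zero (mul_ne_zero (mul_ne_zero (pow_ne_zero _ hl2) hl1) hM0) hN0
  have hFd : (ℓ₂ ^ 2 * ℓ₁ * M * N).IsHomogeneous 5 := (((hd2.pow 2).mul hd1).mul hMd).mul hNd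
  have F1 : ℓ₂ ^ 2 * ℓ₁ * M * N ∈ pointIdeal p₁ ^ 4 := by
    have e : ℓ₂ ^ 2 * ℓ₁ * M * N = ℓ₁ * (ℓ₂ ^ 2 * (M * N)) := by ring
    have e' : pointIdeal p₁ ^ 4 = pointIdeal p₁ ^ 2 * (pointIdeal p₁ * pointIdeal p₁) := by ring
    rw [e, e']
    exact Ideal.mul_mem_left _ _ (Ideal.mul_mem_mul (Ideal.pow_mem_pow m1 2)
      (Ideal.mul_mem_mul hM1 hN1))
  have F2 : ℓ₂ ^ 2 * ℓ₁ * M * N ∈ pointIdeal p₂ ^ 2 := by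
    have e : ℓ₂ ^ 2 * ℓ₁ * M * N = (ℓ₁ * M * N) * ℓ₂ ^ 2 := by ring
    rw [e]
    exact Ideal.mul_mem_left _ _ (Ideal.pow_mem_pow m2 2)
  have F3 : ℓ₂ ^ 2 * ℓ₁ * M * N ∈ pointIdeal p₃ ^ 2 := by
    have e : ℓ₂ ^ 2 * ℓ₁ * M * N = (ℓ₂ ^ 2 * N) * (ℓ₁ * M) := by ring
    rw [e, sq (pointIdeal p₃)]
    exact Ideal.mul_mem_left _ _ (Ideal.mul_mem_mul m3 hM3)
  have F4 : ℓ₂ ^ 2 * ℓ₁ * M * N ∈ pointIdeal p₄ ^ 2 := by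
    have e : ℓ₂ ^ 2 * ℓ₁ * M * N = (ℓ₂ ^ 2 * M) * (ℓ₁ * N) := by ring
    rw [e, sq (pointIdeal p₄)]
    exact Ideal.mul_mem_left _ _ (Ideal.mul_mem_mul m4 hN4)
  generalize ℓ₂ ^ 2 * ℓ₁ * M * N = F at hF0 hFd F1 F2 F3 F4
  have low : ∀ k : ℕ+, (5 / 2 : ℝ) ≤ (alpha (pointIdeal p₁ ^ (2 * (k : ℕ)) ⊓
      pointIdeal p₂ ^ (k : ℕ) ⊓ pointIdeal p₃ ^ (k : ℕ) ⊓ pointIdeal p₄ ^ (k : ℕ)) : ℝ)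
      / ((k : ℕ) : ℝ) := by
    intro k
    have hk : (0 : ℝ) < ((k : ℕ) : ℝ) := by exact_mod_cast k.pos
    have hmem := Nat.sInf_mem (s := {d : ℕ | ∃ f ∈ (pointIdeal p₁ ^ (2 * (k : ℕ)) ⊓
      pointIdeal p₂ ^ (k : ℕ) ⊓ pointIdeal p₃ ^ (k : ℕ) ⊓ pointIdeal p₄ ^ (k : ℕ)),
        f ≠ 0 ∧ MvPolynomial.IsHomogeneous f d}) (by
      have up : ∀ (I : Ideal (MvPolynomial (Fin 3) kk)) (i j : ℕ), j ≤ i * k → F ∈ I ^ i →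
          F ^ (k : ℕ) ∈ I ^ j := by
        intro I i j hij h
        apply Ideal.pow_le_pow_right hij
        rw [pow_mul]
        exact Ideal.pow_mem_pow h _
      exact ⟨5 * k, F ^ (k : ℕ), ⟨⟨⟨up _ 4 _ (by omega) F1, up _ 2 _ (by omega) F2⟩,
        up _ 2 _ (by omega) F3⟩, up _ 2 _ (by omega) F4⟩, pow_ne_zero _ hF0, hFd.pow _⟩)
    obtain ⟨f, ⟨⟨⟨g1, g2⟩, g3⟩, g4⟩, hf0, hfd⟩ := hmem
    have := wd_lower p₁ p₂ p₃ p₄ a b c ha hb hc h4 hs k _ f hf0 hfd g1 g2 g3 g4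
    rw [le_div_iff₀ hk]
    have h' : (5 * (k : ℕ) : ℝ) ≤ 2 * (alpha (pointIdeal p₁ ^ (2 * (k : ℕ)) ⊓
      pointIdeal p₂ ^ (k : ℕ) ⊓ pointIdeal p₃ ^ (k : ℕ) ⊓ pointIdeal p₄ ^ (k : ℕ)) : ℝ) := by
      exact_mod_cast this
    linarith
  apply le_antisymm
  · refine (ciInf_le ⟨5 / 2, ?_⟩ (2 : ℕ+)).trans ?_
    · rintro _ ⟨k, rfl⟩
      exact low k
    · have : alpha (pointIdeal p₁ ^ (2 * ((2 : ℕ+) : ℕ)) ⊓ pointIdeal p₂ ^ ((2 : ℕ+) : ℕ) ⊓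
        pointIdeal p₃ ^ ((2 : ℕ+) : ℕ) ⊓ pointIdeal p₄ ^ ((2 : ℕ+) : ℕ)) ≤ 5 :=
        Nat.sInf_le ⟨F, ⟨⟨⟨F1, F2⟩, F3⟩, F4⟩, hF0, hFd⟩
      have h2 : (((2 : ℕ+) : ℕ) : ℝ) = 2 := by norm_num
      rw [h2]
      have h5 := (Nat.cast_le (α := ℝ)).2 this
      push_cast at h5 ⊢
      linarith
  · exact le_ciInf low
end
end

section
/- Let L be a line in P^2, let p_2, p_3, p_4, p_5 be four distinct points of L, and let p_1 be a point not on L. Let Z = 2p_1 + p_2 + p_3 + p_4 + p_5 be the fat points scheme with a double point at p_1 and simple points at p_2,…,p_5. Then the Waldschmidt constant of I(Z) equals 5/2. -/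
noncomputable section

open MvPolynomial

namespace Wald
/-- dehomogenization -/
def theta (K : Type*) [Field K] : MvPolynomial (Fin 3) K →ₐ[K] Polynomial (Polynomial K) :=
  MvPolynomial.aeval ![Polynomial.C Polynomial.X, 1, Polynomial.X]

lemma theta_monomial {K : Type*} [Field K] (s : Fin 3 →₀ ℕ) (c : K) :
    theta K (MvPolynomial.monomial s c)
      = Polynomial.monomial (s 2) (Polynomial.monomial (s 0) c) := by
  rw [theta, MvPolynomial.aeval_monomial, Finsupp.prod_fintype _ _ (by simp)]
  simp only [Fin.prod_univ_three, Matrix.cons_val_zero, Matrix.cons_val_one, Matrix.cons_val,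
    one_pow, mul_one]
  rw [← Polynomial.C_mul_X_pow_eq_monomial, ← Polynomial.C_mul_X_pow_eq_monomial]
  simp [mul_assoc, Polynomial.algebraMap_apply]

lemma theta_coeff {K : Type*} [Field K] (F : MvPolynomial (Fin 3) K) (i j : ℕ) :
    ((theta K F).coeff i).coeff j
      = ∑ s ∈ F.support, if s 2 = i ∧ s 0 = j then F.coeff s else 0 := by
  conv_lhs => rw [F.as_sum]
  rw [map_sum, Polynomial.finsetSum_coeff, Polynomial.finsetSum_coeff]
  refine Finset.sum_congr rfl fun s _ => ?_
  rw [theta_monomial, Polynomial.coeff_monomial]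
  by_cases h : s 2 = i <;> simp [h, Polynomial.coeff_monomial]

lemma hom_sum {K : Type*} [Field K] {F : MvPolynomial (Fin 3) K} {d : ℕ}
    (hF : F.IsHomogeneous d) {s : Fin 3 →₀ ℕ} (hs : s ∈ F.support) : s 0 + s 1 + s 2 = d := by
  have := hF (MvPolynomial.mem_support_iff.mp hs)
  rw [Finsupp.weight_apply, Finsupp.sum_fintype _ _ (by simp), Fin.sum_univ_three] at this
  simpa using this

lemma key {K : Type*} [Field K] {F : MvPolynomial (Fin 3) K} {d m k : ℕ}
    (hF : F.IsHomogeneous d) (hF0 : F ≠ 0) (hm : ∀ s ∈ F.support, m ≤ s 0 + s 1)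
    (A : Finset K) (hA : ∀ a ∈ A, ∀ i,
      (Polynomial.X - Polynomial.C a) ^ (k - i) ∣ (theta K F).coeff i) :
    ∃ i, i + m ≤ d ∧ A.card * (k - i) + i ≤ d := by
  obtain ⟨s, hs⟩ := MvPolynomial.support_nonempty.mpr hF0
  have hsd := hom_sum hF hs
  have hms := hm s hs
  refine ⟨s 2, by omega, ?_⟩
  set g := (theta K F).coeff (s 2) with hg
  have hg0 : g ≠ 0 := by
    intro h
    have h1 : g.coeff (s 0) = F.coeff s := by
      rw [hg, theta_coeff, Finset.sum_eq_single s]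
      · simp
      · intro t ht hts
        rw [if_neg]
        rintro ⟨h2, h0⟩
        apply hts
        have := hom_sum hF ht
        ext i
        fin_cases i
        · exact h0
        · show t 1 = s 1
          omega
        · exact h2
      · intro h; exact absurd hs h
    rw [h, Polynomial.coeff_zero] at h1
    exact MvPolynomial.mem_support_iff.mp hs h1.symm
  have hdeg : g.natDegree ≤ d - s 2 := by
    rw [Polynomial.natDegree_le_iff_coeff_eq_zero]
    intro N hN
    rw [hg, theta_coeff]
    refine Finset.sum_eq_zero fun t ht => if_neg ?_
    rintro ⟨h2, h0⟩
    have := hom_sum hF ht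
    omega
  have hdvd : (∏ a ∈ A, (Polynomial.X - Polynomial.C a) ^ (k - s 2)) ∣ g := by
    refine Finset.prod_dvd_of_coprime ?_ fun a ha => hA a ha _
    intro a _ b _ hab
    exact (Polynomial.isCoprime_X_sub_C_of_isUnit_sub (sub_ne_zero.mpr hab).isUnit).pow
  have h3 := Polynomial.natDegree_le_of_dvd hdvd hg0
  rw [Polynomial.natDegree_prod_of_monic _ _
    (fun a _ => (Polynomial.monic_X_sub_C a).pow _)] at h3
  simp only [Polynomial.natDegree_pow, Polynomial.natDegree_X_sub_C, mul_one, Finset.sum_const,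
    smul_eq_mul] at h3
  omega

/-- order filtration at the point `(0,0,1)` -/
def Mid (K : Type*) [Field K] (m : ℕ) : Ideal (MvPolynomial (Fin 3) K) where
  carrier := {F | ∀ s, F.coeff s ≠ 0 → m ≤ s 0 + s 1}
  zero_mem' := by simp
  add_mem' := by
    intro a b ha hb s hs
    by_contra hc
    apply hs
    rw [MvPolynomial.coeff_add, not_not.mp (mt (ha s) hc), not_not.mp (mt (hb s) hc), add_zero]
  smul_mem' := by
    intro c x hx s hs
    rw [smul_eq_mul, MvPolynomial.coeff_mul] at hs
    obtain ⟨⟨u, v⟩, huv, hne⟩ := Finset.exists_ne_zero_of_sum_ne_zero hs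
    have := hx v (right_ne_zero_of_mul hne)
    rw [Finset.HasAntidiagonal.mem_antidiagonal] at huv
    simp only at huv
    subst huv
    simp only [Finsupp.add_apply]
    omega

lemma Mid_pow {K : Type*} [Field K] (I : Ideal (MvPolynomial (Fin 3) K)) (h : I ≤ Mid K 1)
    (m : ℕ) : I ^ m ≤ Mid K m := by
  induction m with
  | zero => intro x _ s _; exact Nat.zero_le _
  | succ n ih =>
    rw [pow_succ, Ideal.mul_le]
    intro x hx y hy s hs
    rw [MvPolynomial.coeff_mul] at hs
    obtain ⟨⟨u, v⟩, huv, hne⟩ := Finset.exists_ne_zero_of_sum_ne_zero hs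
    have h1 := ih hx u (left_ne_zero_of_mul hne)
    have h2 := h hy v (right_ne_zero_of_mul hne)
    rw [Finset.HasAntidiagonal.mem_antidiagonal] at huv
    simp only at huv
    subst huv
    simp only [Finsupp.add_apply]
    omega

/-- order filtration at `X = a, Z = 0` -/
def Jid {K : Type*} [Field K] (a : K) (m : ℕ) : Ideal (Polynomial (Polynomial K)) where
  carrier := {F | ∀ i, (Polynomial.X - Polynomial.C a) ^ (m - i) ∣ F.coeff i}
  zero_mem' := by simp
  add_mem' := by
    intro x y hx hy i
    rw [Polynomial.coeff_add]
    exact dvd_add (hx i) (hy i)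
  smul_mem' := by
    intro c x hx i
    rw [smul_eq_mul, Polynomial.coeff_mul]
    refine Finset.dvd_sum fun u hu => ?_
    rw [Finset.HasAntidiagonal.mem_antidiagonal] at hu
    exact Dvd.dvd.mul_left ((pow_dvd_pow _ (by omega)).trans (hx u.2)) _

lemma Jid_pow {K : Type*} [Field K] (a : K) (I : Ideal (Polynomial (Polynomial K)))
    (h : I ≤ Jid a 1) (m : ℕ) : I ^ m ≤ Jid a m := by
  induction m with
  | zero => intro x _ i; simp
  | succ n ih =>
    rw [Submodule.pow_succ, Ideal.mul_le]
    intro x hx y hy i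
    rw [Polynomial.coeff_mul]
    refine Finset.dvd_sum fun u hu => ?_
    rw [Finset.HasAntidiagonal.mem_antidiagonal] at hu
    have := mul_dvd_mul (ih hx u.1) (h hy u.2)
    rw [← pow_add] at this
    exact (pow_dvd_pow _ (by omega)).trans this

lemma lin_form {K : Type*} [Field K] {f : MvPolynomial (Fin 3) K} (hf : f.IsHomogeneous 1) :
    ∃ c : Fin 3 → K, f = ∑ i, MvPolynomial.C (c i) * MvPolynomial.X i := by
  have h : f ∈ MvPolynomial.homogeneousSubmodule (Fin 3) K 1 := hf
  rw [MvPolynomial.homogeneousSubmodule_one_eq_span_X, Submodule.mem_span_range_iff_exists_fun] at h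
  obtain ⟨c, hc⟩ := h
  exact ⟨c, by simp [← hc, MvPolynomial.smul_eq_C_mul]⟩

/-- change of coordinates -/
def psi {K : Type*} [Field K] (q0 q1 p : Fin 3 → K) :
    MvPolynomial (Fin 3) K →ₐ[K] MvPolynomial (Fin 3) K :=
  MvPolynomial.aeval fun i => MvPolynomial.C (q0 i) * MvPolynomial.X 0
    + MvPolynomial.C (q1 i) * MvPolynomial.X 1 + MvPolynomial.C (p i) * MvPolynomial.X 2

lemma psi_lin {K : Type*} [Field K] (q0 q1 p c : Fin 3 → K) :
    psi q0 q1 p (∑ i, MvPolynomial.C (c i) * MvPolynomial.X i)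
      = MvPolynomial.C (c ⬝ᵥ q0) * MvPolynomial.X 0 + MvPolynomial.C (c ⬝ᵥ q1) * MvPolynomial.X 1
        + MvPolynomial.C (c ⬝ᵥ p) * MvPolynomial.X 2 := by
  simp only [psi, dotProduct, Fin.sum_univ_three, map_add, map_mul, MvPolynomial.aeval_X,
    MvPolynomial.algHom_C, MvPolynomial.algebraMap_eq]
  ring

lemma psi_hom {K : Type*} [Field K] (q0 q1 p : Fin 3 → K) {f : MvPolynomial (Fin 3) K} {d : ℕ}
    (hf : f.IsHomogeneous d) : (psi q0 q1 p f).IsHomogeneous d := by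
  have := hf.aeval (n := 1) (fun i => MvPolynomial.C (q0 i) * MvPolynomial.X 0
    + MvPolynomial.C (q1 i) * MvPolynomial.X 1
    + MvPolynomial.C (p i) * (MvPolynomial.X 2 : MvPolynomial (Fin 3) K)) (by
      intro i
      exact ((MvPolynomial.isHomogeneous_C_mul_X _ _).add
        (MvPolynomial.isHomogeneous_C_mul_X _ _)).add (MvPolynomial.isHomogeneous_C_mul_X _ _))
  rwa [one_mul] at this

lemma psi_inj {K : Type*} [Field K] [Infinite K] (q0 q1 p : Fin 3 → K)
    (hspan : ∀ v : Fin 3 → K, ∃ a b c : K, v = a • q0 + b • q1 + c • p)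
    {f : MvPolynomial (Fin 3) K} (hf : f ≠ 0) : psi q0 q1 p f ≠ 0 := by
  intro h
  apply hf
  refine MvPolynomial.funext fun v => ?_
  obtain ⟨a, b, c, rfl⟩ := hspan v
  have h1 : MvPolynomial.eval ![a, b, c] (psi q0 q1 p f)
      = MvPolynomial.eval (a • q0 + b • q1 + c • p) f := by
    rw [psi, ← MvPolynomial.coe_aeval_eq_eval, ← MvPolynomial.coe_aeval_eq_eval]
    simp only [RingHom.coe_coe]
    rw [← AlgHom.comp_apply, MvPolynomial.comp_aeval]
    congr 2
    funext i
    simp [mul_comm]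
  rw [← h1, h]
  simp

lemma psi_p {K : Type*} [Field K] (q0 q1 p : Fin 3 → K) (m : ℕ) {f : MvPolynomial (Fin 3) K}
    (hf : f ∈ pointIdeal p ^ m) : psi q0 q1 p f ∈ Mid K m := by
  apply Mid_pow (Ideal.map (psi q0 q1 p) (pointIdeal p))
  · rw [Ideal.map_le_iff_le_comap, pointIdeal, Ideal.span_le]
    rintro g ⟨hg, hg0⟩
    obtain ⟨c, rfl⟩ := lin_form hg
    have h0 : c ⬝ᵥ p = 0 := by simpa [dotProduct] using hg0
    show psi q0 q1 p _ ∈ Mid K 1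
    rw [psi_lin, h0, map_zero, zero_mul, add_zero]
    apply add_mem <;> apply Ideal.mul_mem_left
    all_goals
      intro s hs
      rw [MvPolynomial.coeff_X] at hs
      have := (ite_ne_right_iff.mp hs).1
      subst this
      simp
  · rw [← Ideal.map_pow]
    exact Ideal.mem_map_of_mem _ hf

lemma psi_q {K : Type*} [Field K] (q0 q1 p q : Fin 3 → K) (a b : K) (hb : b ≠ 0)
    (hq : q = b • (a • q0 + q1)) (m : ℕ) {f : MvPolynomial (Fin 3) K}
    (hf : f ∈ pointIdeal q ^ m) : theta K (psi q0 q1 p f) ∈ Jid a m := by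
  apply Jid_pow a (Ideal.map ((theta K).comp (psi q0 q1 p)) (pointIdeal q))
  · rw [Ideal.map_le_iff_le_comap, pointIdeal, Ideal.span_le]
    rintro g ⟨hg, hg0⟩
    obtain ⟨c, rfl⟩ := lin_form hg
    have h0 : c ⬝ᵥ q = 0 := by simpa [dotProduct] using hg0
    rw [hq, dotProduct_smul, dotProduct_add, dotProduct_smul, smul_eq_mul, smul_eq_mul] at h0
    have h1 : c ⬝ᵥ q1 = - (a * (c ⬝ᵥ q0)) := by
      have := (mul_eq_zero.mp h0).resolve_left hb
      linear_combination this
    show theta K (psi q0 q1 p _) ∈ Jid a 1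
    rw [psi_lin, h1]
    have : theta K (MvPolynomial.C (c ⬝ᵥ q0) * MvPolynomial.X 0
        + MvPolynomial.C (-(a * (c ⬝ᵥ q0))) * MvPolynomial.X 1
        + MvPolynomial.C (c ⬝ᵥ p) * MvPolynomial.X 2)
        = Polynomial.C (Polynomial.C (c ⬝ᵥ q0)) * Polynomial.C (Polynomial.X - Polynomial.C a)
          + Polynomial.C (Polynomial.C (c ⬝ᵥ p)) * Polynomial.X := by
      simp [theta, Polynomial.algebraMap_apply]
      ring
    rw [this]
    apply add_mem <;> apply Ideal.mul_mem_left
    · intro i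
      rcases i with _ | i <;> simp
    · intro i
      rcases i with _ | i <;> simp
  · rw [← Ideal.map_pow]
    exact Ideal.mem_map_of_mem ((theta K).comp (psi q0 q1 p)) hf

lemma exists_line {K : Type*} [Field K] (p q : Fin 3 → K) :
    ∃ f : MvPolynomial (Fin 3) K, f ≠ 0 ∧ f.IsHomogeneous 1 ∧ MvPolynomial.eval p f = 0 ∧
      MvPolynomial.eval q f = 0 := by
  obtain ⟨c, hc, hc0⟩ := Matrix.exists_mulVec_eq_zero_iff (M := Matrix.of ![p, q, 0]) |>.mpr (by
    simp [Matrix.det_fin_three])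
  have e0 := congrFun hc0 0
  have e1 := congrFun hc0 1
  refine ⟨∑ i, MvPolynomial.C (c i) * MvPolynomial.X i, ?_, ?_, ?_, ?_⟩
  · intro h
    apply hc
    funext j
    have := congrArg (MvPolynomial.eval (Pi.single j 1)) h
    simpa [Pi.single_apply] using this
  · exact MvPolynomial.IsHomogeneous.sum _ _ _ fun i _ => MvPolynomial.isHomogeneous_C_mul_X _ _
  · simpa [Matrix.mulVec, dotProduct, mul_comm] using e0
  · simpa [Matrix.mulVec, dotProduct, mul_comm] using e1

lemma exists_M {K : Type*} [Field K] [Infinite K] (p : Fin 4 → Fin 3 → K) (hp : ∀ i, p i ≠ 0) :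
    ∃ M : Fin 3 → K, ∀ i, M ⬝ᵥ p i ≠ 0 := by
  have h : (∏ j, ∑ i, MvPolynomial.C (p j i) * MvPolynomial.X i : MvPolynomial (Fin 3) K) ≠ 0 := by
    rw [Finset.prod_ne_zero_iff]
    intro j _ h
    apply hp j
    funext i
    have := congrArg (MvPolynomial.eval (Pi.single i 1)) h
    simpa [Pi.single_apply] using this
  by_contra hc
  push Not at hc
  apply h
  refine MvPolynomial.funext fun v => ?_
  obtain ⟨i, hi⟩ := hc v
  rw [map_prod, map_zero]
  refine Finset.prod_eq_zero (Finset.mem_univ i) ?_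
  simpa [dotProduct, mul_comm] using hi

lemma coords {K : Type*} [Field K] [Infinite K] (l p₁ : Fin 3 → K) (hoff : l ⬝ᵥ p₁ ≠ 0)
    (p : Fin 4 → Fin 3 → K) (hp : ∀ i, p i ≠ 0) (hl : ∀ i, l ⬝ᵥ p i = 0)
    (hpp : ∀ i j, i < j → ¬ projEq (p i) (p j)) :
    ∃ (q0 q1 : Fin 3 → K) (a b : Fin 4 → K),
      (∀ v : Fin 3 → K, ∃ a b c : K, v = a • q0 + b • q1 + c • p₁) ∧ Function.Injective a ∧
      (∀ i, b i ≠ 0) ∧ ∀ i, p i = b i • (a i • q0 + q1) := by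
  obtain ⟨M, hM⟩ := exists_M p hp
  have hne : ∀ i j, i < j → (M ⬝ᵥ p i)⁻¹ • p i ≠ (M ⬝ᵥ p j)⁻¹ • p j := by
    intro i j hij h
    refine hpp i j hij ⟨(M ⬝ᵥ p j) * (M ⬝ᵥ p i)⁻¹, mul_ne_zero (hM j) (inv_ne_zero (hM i)), ?_⟩
    rw [mul_smul, h, smul_smul, mul_inv_cancel₀ (hM j), one_smul]
  set r : Fin 4 → Fin 3 → K := fun i => (M ⬝ᵥ p i)⁻¹ • p i with hr
  have hMr : ∀ i, M ⬝ᵥ r i = 1 := fun i => by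
    simp [hr, dotProduct_smul, hM i]
  have hlr : ∀ i, l ⬝ᵥ r i = 0 := fun i => by
    simp [hr, dotProduct_smul, hl i]
  have hspan : ∀ v : Fin 3 → K, ∃ a b c : K, v = a • (r 1 - r 0) + b • r 0 + c • p₁ := by
    have hli : LinearIndependent K ![r 1 - r 0, r 0, p₁] := by
      rw [Fintype.linearIndependent_iff]
      intro g hg
      simp only [Fin.sum_univ_three, Matrix.cons_val_zero, Matrix.cons_val_one,
        Matrix.cons_val] at hg
      have h2 : g 2 = 0 := by
        have := congrArg (fun v => l ⬝ᵥ v) hg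
        simpa [dotProduct_add, dotProduct_sub, dotProduct_smul, hlr, hoff] using this
      have h1 : g 1 = 0 := by
        have := congrArg (fun v => M ⬝ᵥ v) hg
        simpa [dotProduct_add, dotProduct_sub, dotProduct_smul, hMr, h2] using this
      have h0 : g 0 = 0 := by
        rw [h1, h2, zero_smul, zero_smul, add_zero, add_zero, smul_eq_zero, sub_eq_zero] at hg
        exact hg.resolve_right (hne 0 1 (by decide)).symm
      intro i
      fin_cases i <;> assumption
    have hs := hli.span_eq_top_of_card_eq_finrank (by simp)
    intro v
    have hv : v ∈ Submodule.span K (Set.range ![r 1 - r 0, r 0, p₁]) := hs ▸ Submodule.mem_top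
    rw [Submodule.mem_span_range_iff_exists_fun] at hv
    obtain ⟨c, hc⟩ := hv
    exact ⟨c 0, c 1, c 2, by simpa [Fin.sum_univ_three] using hc.symm⟩
  have ha : ∀ i, ∃ a : K, r i = a • (r 1 - r 0) + r 0 := by
    intro i
    obtain ⟨a, b, c, h⟩ := hspan (r i)
    have hc : c = 0 := by
      have := congrArg (fun v => l ⬝ᵥ v) h
      simpa [dotProduct_add, dotProduct_sub, dotProduct_smul, hlr, hoff] using this
    have hb : b = 1 := by
      have := congrArg (fun v => M ⬝ᵥ v) h
      simpa [dotProduct_add, dotProduct_sub, dotProduct_smul, hMr, hc] using this.symm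
    exact ⟨a, by rw [h, hc, hb]; simp⟩
  choose a ha using ha
  refine ⟨r 1 - r 0, r 0, a, fun i => M ⬝ᵥ p i, hspan, ?_, hM, ?_⟩
  · intro i j hij
    have : r i = r j := by rw [ha i, ha j, hij]
    rcases lt_trichotomy i j with h | h | h
    · exact absurd this (hne i j h)
    · exact h
    · exact absurd this.symm (hne j i h)
  · intro i
    show p i = (M ⬝ᵥ p i) • _
    rw [← ha i, hr]
    simp only
    rw [smul_smul, mul_inv_cancel₀ (hM i), one_smul]

lemma lower {K : Type*} [Field K] [Infinite K] (l p₁ : Fin 3 → K) (hoff : l ⬝ᵥ p₁ ≠ 0)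
    (p : Fin 4 → Fin 3 → K) (hp : ∀ i, p i ≠ 0) (hl : ∀ i, l ⬝ᵥ p i = 0)
    (hpp : ∀ i j, i < j → ¬ projEq (p i) (p j)) (k d : ℕ) (f : MvPolynomial (Fin 3) K)
    (hf0 : f ≠ 0) (hfd : f.IsHomogeneous d) (h1 : f ∈ pointIdeal p₁ ^ (2 * k))
    (h2 : ∀ i, f ∈ pointIdeal (p i) ^ k) : 5 * k ≤ 2 * d := by
  classical
  obtain ⟨q0, q1, a, b, hspan, hinj, hb, hpab⟩ := coords l p₁ hoff p hp hl hpp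
  obtain ⟨i, hi1, hi2⟩ := key (m := 2 * k) (k := k) (psi_hom q0 q1 p₁ hfd)
    (psi_inj q0 q1 p₁ hspan hf0)
    (fun s hs => psi_p q0 q1 p₁ _ h1 s (MvPolynomial.mem_support_iff.mp hs))
    (Finset.univ.image a) (by
      intro x hx
      obtain ⟨j, _, rfl⟩ := Finset.mem_image.mp hx
      exact psi_q q0 q1 p₁ (p j) (a j) (b j) (hb j) (hpab j) k (h2 j))
  rw [Finset.card_image_of_injective _ hinj, Finset.card_univ, Fintype.card_fin] at hi2
  omega

end Wald

/-- Let `L = {ℓ = 0}` be a line of `ℙ²`, let `p₂, p₃, p₄, p₅` be four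
distinct points of `L`, and let `p₁` be a point not on `L`.  Let
`Z = 2p₁ + p₂ + p₃ + p₄ + p₅`.  Then the Waldschmidt constant of `I(Z)` equals `5/2`. -/
theorem waldschmidt_double_point_off_line_four_points
    {kk : Type*} [Field kk] [IsAlgClosed kk]
    (ℓ : MvPolynomial (Fin 3) kk) (hl0 : ℓ ≠ 0) (hl1 : ℓ.IsHomogeneous 1)
    (p₁ p₂ p₃ p₄ p₅ : Fin 3 → kk)
    (hp10 : p₁ ≠ 0) (hp20 : p₂ ≠ 0) (hp30 : p₃ ≠ 0) (hp40 : p₄ ≠ 0) (hp50 : p₅ ≠ 0)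
    (hoff : MvPolynomial.eval p₁ ℓ ≠ 0)
    (hon2 : MvPolynomial.eval p₂ ℓ = 0) (hon3 : MvPolynomial.eval p₃ ℓ = 0)
    (hon4 : MvPolynomial.eval p₄ ℓ = 0) (hon5 : MvPolynomial.eval p₅ ℓ = 0)
    (hp23 : ¬ projEq p₂ p₃) (hp24 : ¬ projEq p₂ p₄) (hp25 : ¬ projEq p₂ p₅)
    (hp34 : ¬ projEq p₃ p₄) (hp35 : ¬ projEq p₃ p₅) (hp45 : ¬ projEq p₄ p₅) :
    (⨅ k : ℕ+, (alpha (pointIdeal p₁ ^ (2 * (k : ℕ)) ⊓ pointIdeal p₂ ^ (k : ℕ) ⊓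
        pointIdeal p₃ ^ (k : ℕ) ⊓ pointIdeal p₄ ^ (k : ℕ) ⊓ pointIdeal p₅ ^ (k : ℕ)) : ℝ)
          / ((k : ℕ) : ℝ))
      = 5 / 2 := by
  have hinf : Infinite kk := IsAlgClosed.instInfinite
  obtain ⟨l, hl⟩ := Wald.lin_form hl1
  have hev : ∀ p, MvPolynomial.eval p ℓ = l ⬝ᵥ p := fun p => by
    rw [hl]; simp [dotProduct]
  have hlow : ∀ (k d : ℕ) (f : MvPolynomial (Fin 3) kk), f ≠ 0 → f.IsHomogeneous d →
      f ∈ (pointIdeal p₁ ^ (2 * k) ⊓ pointIdeal p₂ ^ k ⊓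
        pointIdeal p₃ ^ k ⊓ pointIdeal p₄ ^ k ⊓ pointIdeal p₅ ^ k) → 5 * k ≤ 2 * d := by
    intro k d f hf0 hfd hf
    obtain ⟨⟨⟨⟨m1, m2⟩, m3⟩, m4⟩, m5⟩ := hf
    refine Wald.lower l p₁ (hev p₁ ▸ hoff) ![p₂, p₃, p₄, p₅] ?_ ?_ ?_ k d f hf0 hfd m1 ?_
    · intro i; fin_cases i <;> assumption
    · intro i; rw [← hev]; fin_cases i <;> assumption
    · intro i j hij
      fin_cases i <;> fin_cases j <;> first | assumption | exact absurd hij (by decide)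
    · intro i; fin_cases i <;> assumption
  obtain ⟨l2, n2, d2, a2, b2⟩ := Wald.exists_line p₁ p₂
  obtain ⟨l3, n3, d3, a3, b3⟩ := Wald.exists_line p₁ p₃
  obtain ⟨l4, n4, d4, a4, b4⟩ := Wald.exists_line p₁ p₄
  obtain ⟨l5, n5, d5, a5, b5⟩ := Wald.exists_line p₁ p₅
  have hmem : ∀ {p : Fin 3 → kk} {f : MvPolynomial (Fin 3) kk}, f.IsHomogeneous 1 →
      MvPolynomial.eval p f = 0 → f ∈ pointIdeal p := fun h1 h2 => Ideal.subset_span ⟨h1, h2⟩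
  set g : MvPolynomial (Fin 3) kk := ℓ * l2 * l3 * l4 * l5 with hg
  have hg0 : g ≠ 0 := by simp [hg, hl0, n2, n3, n4, n5]
  have hgd : g.IsHomogeneous 5 := (((hl1.mul d2).mul d3).mul d4).mul d5
  have g1 : g ∈ pointIdeal p₁ ^ 4 := by
    have : g = ℓ * (l2 * l3 * l4 * l5) := by rw [hg]; ring
    rw [this]
    refine Ideal.mul_mem_left _ _ ?_
    rw [pow_succ, pow_succ, pow_two]
    exact Ideal.mul_mem_mul (Ideal.mul_mem_mul (Ideal.mul_mem_mul (hmem d2 a2) (hmem d3 a3))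
      (hmem d4 a4)) (hmem d5 a5)
  have g2 : g ∈ pointIdeal p₂ ^ 2 := by
    have : g = (l3 * l4 * l5) * (ℓ * l2) := by rw [hg]; ring
    rw [this, pow_two]
    exact Ideal.mul_mem_left _ _ (Ideal.mul_mem_mul (hmem hl1 hon2) (hmem d2 b2))
  have g3 : g ∈ pointIdeal p₃ ^ 2 := by
    have : g = (l2 * l4 * l5) * (ℓ * l3) := by rw [hg]; ring
    rw [this, pow_two]
    exact Ideal.mul_mem_left _ _ (Ideal.mul_mem_mul (hmem hl1 hon3) (hmem d3 b3))
  have g4 : g ∈ pointIdeal p₄ ^ 2 := by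
    have : g = (l2 * l3 * l5) * (ℓ * l4) := by rw [hg]; ring
    rw [this, pow_two]
    exact Ideal.mul_mem_left _ _ (Ideal.mul_mem_mul (hmem hl1 hon4) (hmem d4 b4))
  have g5 : g ∈ pointIdeal p₅ ^ 2 := by
    have : g = (l2 * l3 * l4) * (ℓ * l5) := by rw [hg]; ring
    rw [this, pow_two]
    exact Ideal.mul_mem_left _ _ (Ideal.mul_mem_mul (hmem hl1 hon5) (hmem d5 b5))
  have hpw : ∀ (I : Ideal (MvPolynomial (Fin 3) kk)) (a b k : ℕ), b ≤ a * k → g ∈ I ^ a →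
      g ^ k ∈ I ^ b := by
    intro I a b k hb h
    have := Ideal.pow_mem_pow h k
    rw [← pow_mul] at this
    exact Ideal.pow_le_pow_right hb this
  apply le_antisymm
  · refine (ciInf_le ⟨0, ?_⟩ (2 : ℕ+)).trans ?_
    · rintro _ ⟨k, rfl⟩
      positivity
    · have : alpha (pointIdeal p₁ ^ (2 * ((2 : ℕ+) : ℕ)) ⊓ pointIdeal p₂ ^ ((2 : ℕ+) : ℕ) ⊓
        pointIdeal p₃ ^ ((2 : ℕ+) : ℕ) ⊓ pointIdeal p₄ ^ ((2 : ℕ+) : ℕ) ⊓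
        pointIdeal p₅ ^ ((2 : ℕ+) : ℕ)) ≤ 5 :=
        Nat.sInf_le ⟨g, ⟨⟨⟨⟨g1, g2⟩, g3⟩, g4⟩, g5⟩, hg0, hgd⟩
      have h5 : (alpha (pointIdeal p₁ ^ (2 * ((2 : ℕ+) : ℕ)) ⊓ pointIdeal p₂ ^ ((2 : ℕ+) : ℕ) ⊓
        pointIdeal p₃ ^ ((2 : ℕ+) : ℕ) ⊓ pointIdeal p₄ ^ ((2 : ℕ+) : ℕ) ⊓
        pointIdeal p₅ ^ ((2 : ℕ+) : ℕ)) : ℝ) ≤ 5 := by exact_mod_cast this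
      have h2 : (((2 : ℕ+) : ℕ) : ℝ) = 2 := by norm_num
      rw [h2]
      exact div_le_div_of_nonneg_right h5 (by norm_num)
  · refine le_ciInf fun k => ?_
    have hne : {d : ℕ | ∃ f ∈ (pointIdeal p₁ ^ (2 * (k : ℕ)) ⊓ pointIdeal p₂ ^ (k : ℕ) ⊓
        pointIdeal p₃ ^ (k : ℕ) ⊓ pointIdeal p₄ ^ (k : ℕ) ⊓ pointIdeal p₅ ^ (k : ℕ)),
        f ≠ 0 ∧ MvPolynomial.IsHomogeneous f d}.Nonempty :=
      ⟨5 * k, g ^ (k : ℕ), ⟨⟨⟨⟨hpw _ 4 _ _ (by omega) g1, hpw _ 2 _ _ (by omega) g2⟩,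
        hpw _ 2 _ _ (by omega) g3⟩, hpw _ 2 _ _ (by omega) g4⟩, hpw _ 2 _ _ (by omega) g5⟩,
        pow_ne_zero _ hg0, hgd.pow _⟩
    obtain ⟨f, hf, hf0, hfd⟩ := Nat.sInf_mem hne
    have h := hlow k _ f hf0 hfd hf
    have hk : (0 : ℝ) < ((k : ℕ) : ℝ) := by exact_mod_cast k.pos
    rw [div_le_div_iff₀ (by norm_num) hk, mul_comm _ (2 : ℝ)]
    exact_mod_cast h
end
end
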